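/- arXiv:2007.11300 — 2 statements merged into one kernel-verified Lean document; each statement's English description precedes it below -/
import Mathlib

section
/- Let −1 < β < 0 and ν > −1/2. Then for all x > 0, ( e^{−βx} K_{ν+2}(x) / x^{ν−1} ) · ∫_0^x e^{βt} t^ν I_ν(t) dt < (2ν+7) / ((2ν+1)(1+β)). -/
open Real MeasureTheory

/-- Modified Bessel function of the first kind, `I_ν(x) = ∑_{k} (x/2)^{ν+2k} / (Γ(ν+k+1) k!)`. -/
noncomputable def besselI (ν x : ℝ) : ℝ :=
  ∑' k : ℕ, (x / 2) ^ (ν + 2 * (k : ℝ)) / (Real.Gamma (ν + (k : ℝ) + 1) * (Nat.factorial k : ℝ))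

/-- Modified Bessel function of the second kind, `K_ν(x) = ∫_0^∞ e^{-x cosh t} cosh(ν t) dt`. -/
noncomputable def besselK (ν x : ℝ) : ℝ :=
  ∫ t in Set.Ioi (0 : ℝ), Real.exp (-x * Real.cosh t) * Real.cosh (ν * t)

/-- Lower incomplete gamma function `γ(a, x) = ∫_0^x t^{a-1} e^{-t} dt`. -/
noncomputable def lowerIncGamma (a x : ℝ) : ℝ :=
  ∫ t in (0 : ℝ)..x, t ^ (a - 1) * Real.exp (-t)

noncomputable def phiT (ν y : ℝ) (k : ℕ) : ℝ := y ^ k / (Real.Gamma (ν + k + 1) * (Nat.factorial k : ℝ))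
noncomputable def Phi (ν y : ℝ) : ℝ := ∑' k : ℕ, phiT ν y k

lemma gpos {ν : ℝ} (h : -1 < ν) (k : ℕ) : 0 < Real.Gamma (ν + k + 1) := by
  apply Real.Gamma_pos_of_pos
  have : (0:ℝ) ≤ k := k.cast_nonneg
  linarith

lemma phiT_succ {ν : ℝ} (h : -1 < ν) (y : ℝ) (k : ℕ) :
    phiT ν y (k+1) = phiT ν y k * (y / ((ν + k + 1) * (k + 1))) := by
  have h0 : (0:ℝ) ≤ k := k.cast_nonneg
  have h1 : ν + k + 1 ≠ 0 := by linarith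
  have h2 := (gpos h k).ne'
  have h3 : Real.Gamma (ν + (k + 1 : ℕ) + 1) = (ν + k + 1) * Real.Gamma (ν + k + 1) := by
    rw [← Real.Gamma_add_one h1]; congr 1; push_cast; ring
  unfold phiT
  rw [h3, Nat.factorial_succ]
  have h4 : (Nat.factorial k : ℝ) ≠ 0 := by positivity
  push_cast
  field_simp
  ring

lemma phiT_summable {ν : ℝ} (h : -1 < ν) (y : ℝ) : Summable (phiT ν y) := by
  by_cases hy : y = 0
  · apply summable_of_ne_finset_zero (s := {0})
    intro b hb
    have : b ≠ 0 := by simpa using hb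
    simp [phiT, hy, this]
  · apply summable_of_ratio_test_tendsto_lt_one (l := 0) one_pos
    · refine Filter.Eventually.of_forall fun k => ?_
      unfold phiT
      have := (gpos h k).ne'
      have h4 : (Nat.factorial k : ℝ) ≠ 0 := by positivity
      positivity
    · have : ∀ k : ℕ, ‖phiT ν y (k+1)‖ / ‖phiT ν y k‖ = |y| * ((ν + k + 1)⁻¹ * ((k:ℝ)+1)⁻¹) := by
        intro k
        have h0 : (0:ℝ) ≤ k := k.cast_nonneg
        have h1 : 0 < ν + k + 1 := by linarith
        have hne : ‖phiT ν y k‖ ≠ 0 := by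
          unfold phiT
          have := (gpos h k).ne'
          have h4 : (Nat.factorial k : ℝ) ≠ 0 := by positivity
          exact norm_ne_zero_iff.mpr (by positivity)
        rw [phiT_succ h, norm_mul, mul_div_cancel_left₀ _ hne, norm_div, Real.norm_eq_abs, Real.norm_eq_abs,
          abs_of_pos (by positivity : 0 < (ν + k + 1) * ((k:ℝ)+1))]
        field_simp
      simp_rw [this]
      have t1 : Filter.Tendsto (fun k : ℕ => ((k:ℝ)+1)⁻¹) Filter.atTop (nhds 0) := by
        simpa using tendsto_one_div_add_atTop_nhds_zero_nat (𝕜 := ℝ)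
      have t2 : Filter.Tendsto (fun k : ℕ => (ν + (k:ℝ)+1)⁻¹) Filter.atTop (nhds 0) := by
        apply Filter.Tendsto.inv_tendsto_atTop
        apply Filter.tendsto_atTop_add_const_right
        exact Filter.tendsto_atTop_add_const_left _ _ tendsto_natCast_atTop_atTop
      simpa using (t2.mul t1).const_mul |y|

lemma phiT_deriv {ν : ℝ} (y : ℝ) (k : ℕ) :
    HasDerivAt (fun y => phiT ν y (k+1)) (phiT (ν+1) y k) y := by
  unfold phiT
  have := (hasDerivAt_pow (k+1) y).div_const (Real.Gamma (ν + (k+1:ℕ) + 1) * (Nat.factorial (k+1) : ℝ))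
  convert! this using 1
  rw [Nat.factorial_succ]
  have : ν + ((k + 1 : ℕ):ℝ) + 1 = ν + 1 + k + 1 := by push_cast; ring
  rw [this]
  have h4 : (Nat.factorial k : ℝ) ≠ 0 := by positivity
  push_cast
  by_cases hg : Real.Gamma (ν + 1 + k + 1) = 0
  · simp [hg]
  · field_simp
    try simp

lemma Phi_deriv {ν : ℝ} (h : -1 < ν) (y : ℝ) : HasDerivAt (Phi ν) (Phi (ν+1) y) y := by
  have hs : Phi ν = fun y => phiT ν y 0 + ∑' k : ℕ, phiT ν y (k+1) := by
    ext z
    exact (phiT_summable h z).tsum_eq_zero_add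
  have h' : -1 < ν + 1 := by linarith
  have key : HasDerivAt (fun z => ∑' k : ℕ, phiT ν z (k+1)) (∑' k, phiT (ν+1) y k) y := by
    apply hasDerivAt_tsum_of_isPreconnected (g := fun k z => phiT ν z (k+1)) (g' := fun k z => phiT (ν+1) z k) (u := fun k => phiT (ν+1) (|y|+1) k) (t := Metric.ball 0 (|y|+1)) (y₀ := y)
    · exact phiT_summable h' _
    · exact Metric.isOpen_ball
    · exact (convex_ball _ _).isPreconnected
    · intro n z _; exact phiT_deriv z n
    · intro n z hz
      have hz : |z| ≤ |y| + 1 := by simpa using (mem_ball_zero_iff.mp hz).le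
      unfold phiT
      have := gpos h' n
      rw [norm_div, norm_pow, Real.norm_eq_abs, Real.norm_eq_abs, abs_of_pos (by positivity : 0 < Real.Gamma (ν + 1 + n + 1) * (Nat.factorial n : ℝ))]
      gcongr
    · simp
    · exact (summable_nat_add_iff 1).mpr (phiT_summable h y)
    · simp
  rw [hs]
  have h0 : (fun z => phiT ν z 0 + ∑' k : ℕ, phiT ν z (k+1)) = fun z => phiT ν 0 0 + ∑' k : ℕ, phiT ν z (k+1) := by
    ext z; simp [phiT]
  rw [h0]
  exact key.const_add _

lemma Phi_rec {ν : ℝ} (h : -1 < ν) (y : ℝ) : Phi ν y = (ν+1) * Phi (ν+1) y + y * Phi (ν+2) y := by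
  have h1 : -1 < ν + 1 := by linarith
  have h2 : -1 < ν + 2 := by linarith
  have hs1 := phiT_summable h1 y
  have hs2 := phiT_summable h2 y
  unfold Phi
  rw [(phiT_summable h y).tsum_eq_zero_add, hs1.tsum_eq_zero_add, mul_add, add_assoc, ← tsum_mul_left, ← tsum_mul_left,
    ← ((summable_nat_add_iff 1).mpr hs1 |>.mul_left _).tsum_add (hs2.mul_left _)]
  congr 1
  · simp only [phiT]
    have : Real.Gamma (ν+1+1) = (ν+1) * Real.Gamma (ν+1) := Real.Gamma_add_one (by linarith)
    have hp : Real.Gamma (ν+1) ≠ 0 := (Real.Gamma_pos_of_pos (by linarith)).ne'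
    have : ν + 1 ≠ 0 := by linarith
    simp [*]
    field_simp
  · congr 1; ext k
    have h0 : (0:ℝ) ≤ k := k.cast_nonneg
    have e1 : ν + ((k+1:ℕ):ℝ) + 1 = ν + k + 2 := by push_cast; ring
    have e2 : ν + 1 + ((k+1:ℕ):ℝ) + 1 = ν + k + 2 + 1 := by push_cast; ring
    have e3 : ν + 2 + (k:ℝ) + 1 = ν + k + 2 + 1 := by ring
    have hne : ν + k + 2 ≠ 0 := by linarith
    have hp : Real.Gamma (ν+k+2) ≠ 0 := (Real.Gamma_pos_of_pos (by linarith)).ne'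
    have h4 : (Nat.factorial k : ℝ) ≠ 0 := by positivity
    simp only [phiT]
    rw [e1, e2, e3, Real.Gamma_add_one hne, Nat.factorial_succ]
    push_cast
    field_simp
    ring

lemma Phi_pos {ν : ℝ} (h : -1 < ν) {y : ℝ} (hy : 0 ≤ y) : 0 < Phi ν y := by
  have hn : ∀ k, 0 ≤ phiT ν y k := fun k => by
    have := gpos h k
    unfold phiT; positivity
  apply (phiT_summable h y).tsum_pos hn 0
  have := gpos h 0
  unfold phiT
  simp at this ⊢
  exact this

lemma Phi_zero (ν : ℝ) : Phi ν 0 = 1 / Real.Gamma (ν+1) := by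
  unfold Phi
  rw [tsum_eq_single 0]
  · simp [phiT]
  · intro b hb; simp [phiT, hb]

lemma besselI_eq (ν : ℝ) {x : ℝ} (hx : 0 < x) : besselI ν x = (x/2)^ν * Phi ν (x^2/4) := by
  unfold besselI Phi
  rw [← tsum_mul_left]
  congr 1; ext k
  have : (x^2/4)^k = (x/2)^(2*(k:ℝ)) := by
    rw [Real.rpow_mul (by positivity), Real.rpow_natCast, Real.rpow_two]; congr 1; ring
  rw [Real.rpow_add (by positivity), phiT, this]
  ring

lemma besselI_deriv {ν : ℝ} (h : -1 < ν) {x : ℝ} (hx : 0 < x) :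
    HasDerivAt (besselI ν) (besselI (ν+1) x + ν / x * besselI ν x) x := by
  have h1 : HasDerivAt (fun x : ℝ => (x/2)^ν * Phi ν (x^2/4)) (besselI (ν+1) x + ν / x * besselI ν x) x := by
    have a := ((hasDerivAt_id x).div_const 2).rpow_const (p := ν) (Or.inl (by simp; positivity))
    have b : HasDerivAt (fun x : ℝ => x^2/4) (x/2) x := by
      convert! (hasDerivAt_pow 2 x).div_const 4 using 1; norm_num; ring
    have c := (Phi_deriv h (x^2/4)).comp x b
    convert! a.mul c using 1
    rw [besselI_eq _ hx, besselI_eq _ hx, Real.rpow_add_one (by positivity)]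
    simp only [id]
    rw [Real.rpow_sub_one (by positivity)]
    simp
    field_simp
    ring
  apply h1.congr_of_eventuallyEq
  filter_upwards [lt_mem_nhds hx] with z hz
  exact besselI_eq _ hz

lemma besselI_rec {ν : ℝ} (h : -1 < ν) {x : ℝ} (hx : 0 < x) :
    besselI ν x = 2 * (ν+1) / x * besselI (ν+1) x + besselI (ν+2) x := by
  rw [besselI_eq _ hx, besselI_eq _ hx, besselI_eq _ hx, Phi_rec h, Real.rpow_add_one (by positivity), Real.rpow_add (by positivity),
   Real.rpow_two]
  field_simp
  ring

lemma besselI_pos {ν : ℝ} (h : -1 < ν) {x : ℝ} (hx : 0 < x) : 0 < besselI ν x := by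
  rw [besselI_eq _ hx]
  have := Phi_pos h (y := x^2/4) (by positivity)
  positivity

lemma K_bd {μ x : ℝ} (hx : 0 < x) {t : ℝ} (ht0 : 0 ≤ t) (ht : 4 * (|μ|+1) / x ≤ t) :
    Real.exp (-x * Real.cosh t) * Real.cosh (μ * t) ≤ Real.exp (-1 * t) := by
  have h1 : Real.cosh (μ * t) ≤ Real.exp (|μ| * t) := by
    rw [← Real.cosh_abs, abs_mul, abs_of_nonneg ht0, Real.cosh_eq]
    have : Real.exp (-(|μ| * t)) ≤ Real.exp (|μ| * t) := by
      apply Real.exp_le_exp.mpr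
      have : 0 ≤ |μ| * t := by positivity
      linarith
    linarith
  have h2 : t^2/4 ≤ Real.cosh t := by
    rw [Real.cosh_eq]
    have := Real.quadratic_le_exp_of_nonneg ht0
    have := Real.exp_pos (-t)
    linarith
  calc _ ≤ Real.exp (-x * Real.cosh t) * Real.exp (|μ| * t) := by gcongr
    _ = Real.exp (-x * Real.cosh t + |μ| * t) := by rw [Real.exp_add]
    _ ≤ _ := by
      apply Real.exp_le_exp.mpr
      rw [div_le_iff₀ hx] at ht
      have h3 := mul_le_mul_of_nonneg_left h2 hx.le
      have h4 := mul_le_mul_of_nonneg_left ht ht0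
      nlinarith

lemma K_int (μ : ℝ) {x : ℝ} (hx : 0 < x) :
    IntegrableOn (fun t => Real.exp (-x * Real.cosh t) * Real.cosh (μ * t)) (Set.Ioi 0) := by
  apply integrable_of_isBigO_exp_neg (b := 1) one_pos
  · fun_prop
  · apply Asymptotics.IsBigO.of_bound 1
    filter_upwards [Filter.eventually_ge_atTop 0, Filter.eventually_ge_atTop (4 * (|μ|+1) / x)] with t h0 h1
    have hp : 0 < Real.exp (-x * Real.cosh t) * Real.cosh (μ * t) := by
      have := Real.cosh_pos (μ * t)
      positivity
    rw [Real.norm_of_nonneg hp.le, Real.norm_of_nonneg (by positivity), one_mul]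
    exact K_bd hx h0 h1

lemma cosh_prod (μ t : ℝ) : Real.cosh t * Real.cosh (μ * t) =
    (Real.cosh ((μ+1) * t) + Real.cosh ((μ-1)*t)) / 2 := by
  have e1 : (μ+1) * t = μ * t + t := by ring
  have e2 : (μ-1) * t = μ * t - t := by ring
  rw [e1, e2, Real.cosh_add, Real.cosh_sub]; ring

lemma sinh_prod (μ t : ℝ) : Real.sinh t * Real.sinh (μ * t) =
    (Real.cosh ((μ+1) * t) - Real.cosh ((μ-1)*t)) / 2 := by
  have e1 : (μ+1) * t = μ * t + t := by ring
  have e2 : (μ-1) * t = μ * t - t := by ring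
  rw [e1, e2, Real.cosh_add, Real.cosh_sub]; ring

lemma K_deriv0 (μ : ℝ) {x : ℝ} (hx : 0 < x) :
    HasDerivAt (besselK μ) (-(besselK (μ+1) x + besselK (μ-1) x)/2) x := by
  have key := hasDerivAt_integral_of_dominated_loc_of_deriv_le (μ := volume.restrict (Set.Ioi (0:ℝ)))
    (F := fun x t => Real.exp (-x * Real.cosh t) * Real.cosh (μ * t))
    (F' := fun x t => -(Real.exp (-x * Real.cosh t) * Real.cosh ((μ+1) * t) + Real.exp (-x * Real.cosh t) * Real.cosh ((μ-1) * t))/2)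
    (bound := fun t => (Real.exp (-(x/2) * Real.cosh t) * Real.cosh ((μ+1) * t) + Real.exp (-(x/2) * Real.cosh t) * Real.cosh ((μ-1) * t))/2)
    (x₀ := x) (s := Set.Ioi (x/2)) (Ioi_mem_nhds (by linarith))
    (Filter.Eventually.of_forall fun y => (by fun_prop : Continuous _).aestronglyMeasurable)
    (K_int μ hx) ((by fun_prop : Continuous _).aestronglyMeasurable)
    (by
      refine Filter.Eventually.of_forall fun t y hy => ?_
      have hy : x/2 < y := hy
      have c0 := Real.cosh_pos t
      have c1 := Real.cosh_pos ((μ+1)*t)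
      have c2 := Real.cosh_pos ((μ-1)*t)
      rw [norm_div, norm_neg, Real.norm_of_nonneg (by positivity), Real.norm_of_nonneg (by positivity)]
      gcongr)
    (((K_int (μ+1) (half_pos hx)).add (K_int (μ-1) (half_pos hx))).div_const 2)
    (by
      refine Filter.Eventually.of_forall fun t y hy => ?_
      have h : HasDerivAt (fun y : ℝ => -y * Real.cosh t) (-1 * Real.cosh t) y := (hasDerivAt_neg y).mul_const _
      convert! h.exp.mul_const (Real.cosh (μ * t)) using 1
      have := cosh_prod μ t
      linear_combination (Real.exp (-y * Real.cosh t)) * this)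
  convert! key.2 using 1
  rw [integral_div, integral_neg, integral_add (K_int (μ+1) hx) (K_int (μ-1) hx)]
  rfl

lemma K_rec (μ : ℝ) {x : ℝ} (hx : 0 < x) :
    x * (besselK (μ+1) x - besselK (μ-1) x) = 2 * μ * besselK μ x := by
  have hfInt : IntegrableOn (fun t => x/2 * (Real.exp (-x * Real.cosh t) * Real.cosh ((μ+1) * t) - Real.exp (-x * Real.cosh t) * Real.cosh ((μ-1) * t)) - μ * (Real.exp (-x * Real.cosh t) * Real.cosh (μ * t))) (Set.Ioi 0) :=
    (((K_int (μ+1) hx).sub (K_int (μ-1) hx)).const_mul _).sub ((K_int μ hx).const_mul _)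
  have key := integral_Ioi_of_hasDerivAt_of_tendsto' (a := 0) (m := 0)
    (f := fun t => -(Real.exp (-x * Real.cosh t) * Real.sinh (μ * t))) (fun t _ => by
      have h1 : HasDerivAt (fun t : ℝ => -x * Real.cosh t) (-x * Real.sinh t) t := (Real.hasDerivAt_cosh t).const_mul _
      have h2 : HasDerivAt (fun t : ℝ => μ * t) (μ * 1) t := (hasDerivAt_id t).const_mul _
      convert! (h1.exp.mul h2.sinh).neg using 1
      have := sinh_prod μ t
      linear_combination (-x * Real.exp (-x * Real.cosh t)) * this) hfInt (by
      apply squeeze_zero_norm' (a := fun t => Real.exp (-1 * t))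
      · filter_upwards [Filter.eventually_ge_atTop 0, Filter.eventually_ge_atTop (4 * (|μ|+1) / x)] with t h0 h1
        refine le_trans ?_ (K_bd hx h0 h1)
        rw [norm_neg, norm_mul, Real.norm_of_nonneg (Real.exp_pos _).le]
        gcongr
        rw [Real.norm_eq_abs, Real.abs_sinh, ← Real.cosh_abs]
        exact (Real.sinh_lt_cosh _).le
      · simpa using Real.tendsto_exp_neg_atTop_nhds_zero)
  have hsub : IntegrableOn (fun t => x/2 * (Real.exp (-x * Real.cosh t) * Real.cosh ((μ+1) * t) - Real.exp (-x * Real.cosh t) * Real.cosh ((μ-1) * t))) (Set.Ioi 0) :=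
    ((K_int (μ+1) hx).sub (K_int (μ-1) hx)).const_mul _
  rw [integral_sub hsub ((K_int μ hx).const_mul _),
    integral_const_mul, integral_const_mul, integral_sub (K_int (μ+1) hx) (K_int (μ-1) hx)] at key
  simp only [mul_zero, Real.sinh_zero, neg_zero, sub_zero] at key
  unfold besselK
  linarith

lemma K_pos (μ x : ℝ) : 0 ≤ besselK μ x := by
  apply integral_nonneg
  intro t
  have := Real.cosh_pos (μ * t)
  show 0 ≤ Real.exp (-x * Real.cosh t) * Real.cosh (μ * t)
  positivity

lemma K_mono {μ : ℝ} (h : -(1/2) < μ) {x : ℝ} (hx : 0 < x) : besselK μ x ≤ besselK (μ+1) x := by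
  apply setIntegral_mono_on (K_int μ hx) (K_int _ hx) measurableSet_Ioi
  intro t ht
  have ht : 0 < t := ht
  gcongr
  rw [Real.cosh_le_cosh, abs_mul, abs_mul]
  gcongr 1
  rw [abs_of_pos (by linarith : 0 < μ + 1), abs_le]
  constructor <;> linarith

lemma K_upper {μ : ℝ} (h : 0 < μ) {x : ℝ} (hx : 0 < x) :
    besselK μ x ≤ 1/2 * (2/x)^μ * Real.Gamma μ + 1 / (2 * μ) := by
  have hr : 0 < x / 2 := by positivity
  have hG := Real.integral_rpow_mul_exp_neg_mul_Ioi h hr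
  have hGi : IntegrableOn (fun t : ℝ => t ^ (μ - 1) * Real.exp (-(x/2 * t))) (Set.Ioi 0) := by
    apply Integrable.of_integral_ne_zero
    rw [hG]
    have := Real.Gamma_pos_of_pos h
    positivity
  have himg : Real.exp '' Set.univ = Set.Ioi 0 := by rw [Set.image_univ, Real.range_exp]
  have hder : ∀ t ∈ Set.univ, HasDerivWithinAt Real.exp (Real.exp t) Set.univ t :=
    fun t _ => (Real.hasDerivAt_exp t).hasDerivWithinAt
  have hinj : Set.InjOn Real.exp Set.univ := Real.exp_injective.injOn
  have e1 := integral_image_eq_integral_abs_deriv_smul MeasurableSet.univ hder hinj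
    (fun t : ℝ => t ^ (μ - 1) * Real.exp (-(x/2 * t)))
  have e2 := (integrableOn_image_iff_integrableOn_abs_deriv_smul MeasurableSet.univ hder hinj
    (fun t : ℝ => t ^ (μ - 1) * Real.exp (-(x/2 * t)))).mp (by rw [himg]; exact hGi)
  have hs : ∀ t : ℝ, |Real.exp t| • (Real.exp t ^ (μ-1) * Real.exp (-(x/2 * Real.exp t))) =
      Real.exp (-(x/2 * Real.exp t)) * Real.exp (μ * t) := by
    intro t
    rw [abs_of_pos (Real.exp_pos t), smul_eq_mul, ← Real.exp_mul, ← mul_assoc, ← Real.exp_add, mul_comm]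
    congr 2; ring
  simp_rw [hs] at e1 e2
  rw [himg, hG] at e1
  rw [setIntegral_univ] at e1
  rw [integrableOn_univ] at e2
  have e3 : ∫ t in Set.Ioi 0, Real.exp (-(x/2 * Real.exp t)) * Real.exp (μ * t) ≤ (1/(x/2))^μ * Real.Gamma μ := by
    rw [e1]
    apply setIntegral_le_integral e2
    exact Filter.Eventually.of_forall fun t => by positivity
  have e4 : ∫ t in Set.Ioi (0:ℝ), Real.exp (-μ * t) = 1 / μ := by
    rw [integral_exp_mul_Ioi (by linarith : -μ < 0)]
    simp
  have i4 : IntegrableOn (fun t : ℝ => Real.exp (-μ * t)) (Set.Ioi 0) := exp_neg_integrableOn_Ioi 0 h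
  have : besselK μ x ≤ ∫ t in Set.Ioi (0:ℝ), (1/2 * (Real.exp (-(x/2 * Real.exp t)) * Real.exp (μ * t)) + 1/2 * Real.exp (-μ * t)) := by
    apply setIntegral_mono_on (K_int μ hx) ((e2.integrableOn.const_mul _).add (i4.const_mul _)) measurableSet_Ioi
    intro t _
    have a1 : Real.exp (-x * Real.cosh t) ≤ Real.exp (-(x/2 * Real.exp t)) := by
      apply Real.exp_le_exp.mpr
      rw [Real.cosh_eq]
      have := mul_pos hx (Real.exp_pos (-t))
      linarith
    have a2 : Real.exp (-x * Real.cosh t) ≤ 1 := by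
      apply Real.exp_le_one_iff.mpr
      have := mul_pos hx (Real.cosh_pos t)
      linarith
    have a3 := mul_le_mul_of_nonneg_right a1 (Real.exp_pos (μ * t)).le
    have a4 := mul_le_mul_of_nonneg_right a2 (Real.exp_pos (-μ * t)).le
    rw [Real.cosh_eq (μ * t)]
    rw [neg_mul] at a4 ⊢
    simp only [neg_mul, Pi.add_apply] at *
    linarith
  rw [integral_add (e2.integrableOn.const_mul _) (i4.const_mul _), integral_const_mul, integral_const_mul, e4] at this
  have e5 : 1 / (x/2) = 2/x := by field_simp
  rw [e5] at e3
  have e6 : 1/2 * (1/μ) = 1/(2*μ) := by field_simp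
  linarith

lemma wronsk_const {μ : ℝ} (h : 0 < μ) {x : ℝ} (hx : 0 < x) :
    HasDerivAt (fun x => x * (besselI μ x * besselK (μ+1) x + besselI (μ+1) x * besselK μ x)) 0 x := by
  have d1 := besselI_deriv (ν := μ) (by linarith) hx
  have d2 := besselI_deriv (ν := μ+1) (by linarith) hx
  have d3 := K_deriv0 (μ+1) hx
  have d4 := K_deriv0 μ hx
  have r1 := besselI_rec (ν := μ) (by linarith) hx
  have r2 := K_rec (μ+1) hx
  have r3 := K_rec μ hx
  have e1 : μ + 1 + 1 = μ + 2 := by ring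
  have e2 : μ + 1 - 1 = μ := by ring
  rw [e1] at d2 d3 r2
  rw [e2] at d3 r2
  convert! (hasDerivAt_id x).mul ((d1.mul d3).add (d2.mul d4)) using 1
  simp only [Pi.add_apply, Pi.mul_apply, id]
  have r1' : besselI (μ+2) x = besselI μ x - 2 * (μ+1) / x * besselI (μ+1) x := by linarith
  have r2' : besselK (μ+2) x = besselK μ x + 2 * (μ+1) / x * besselK (μ+1) x := by
    field_simp; linarith
  have r3' : besselK (μ-1) x = besselK (μ+1) x - 2 * μ / x * besselK μ x := by
    field_simp; linarith
  rw [r1', r2', r3']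
  field_simp
  ring

lemma wronsk_le {μ : ℝ} (h : 0 < μ) {x : ℝ} (hx : 0 < x) :
    x * (besselI μ x * besselK (μ+1) x + besselI (μ+1) x * besselK μ x) ≤ 1 := by
  set W := fun x => x * (besselI μ x * besselK (μ+1) x + besselI (μ+1) x * besselK μ x) with hW
  have hc : ∀ y ∈ Set.Ioi (0:ℝ), W y = W x := by
    intro y hy
    apply IsOpen.is_const_of_deriv_eq_zero isOpen_Ioi (convex_Ioi (0:ℝ)).isPreconnected
      (fun z hz => (wronsk_const h hz).differentiableAt.differentiableWithinAt) (fun z hz => (wronsk_const h hz).deriv) hy hx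

  have hG : Real.Gamma (μ+1) = μ * Real.Gamma μ := Real.Gamma_add_one h.ne'
  have hGp := Real.Gamma_pos_of_pos h
  set B := fun y : ℝ => Phi μ (y^2/4) * Real.Gamma (μ+1) + y * (y/2)^μ * Phi μ (y^2/4) / (2 * (μ+1))
     + y^2/4 * Phi (μ+1) (y^2/4) * Real.Gamma μ + y * (y/2) * (y/2)^μ * Phi (μ+1) (y^2/4) / (2 * μ) with hB
  have hle : ∀ y ∈ Set.Ioi (0:ℝ), W x ≤ B y := by
    intro y hy
    rw [← hc y hy]
    have hy : 0 < y := hy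
    have k1 := K_upper (μ := μ+1) (by linarith) hy
    have k2 := K_upper h hy
    have p1 := besselI_pos (ν := μ) (by linarith) hy
    have p2 := besselI_pos (ν := μ+1) (by linarith) hy
    have : W y ≤ y * (besselI μ y * (1/2 * (2/y)^(μ+1) * Real.Gamma (μ+1) + 1 / (2 * (μ+1))) + besselI (μ+1) y * (1/2 * (2/y)^μ * Real.Gamma μ + 1 / (2 * μ))) := by
      simp only [hW]
      gcongr
    refine this.trans (le_of_eq ?_)
    rw [besselI_eq _ hy, besselI_eq _ hy, Real.rpow_add_one (by positivity), Real.rpow_add_one (by positivity)]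
    have : (2/y)^μ = ((y/2)^μ)⁻¹ := by rw [← Real.inv_rpow (by positivity)]; congr 1; field_simp
    rw [this]
    simp only [hB]
    have : 0 < (y/2)^μ := by positivity
    have : μ + 1 ≠ 0 := by linarith
    field_simp
    ring
  have hcont : ContinuousAt B 0 := by
    have c1 : Continuous (Phi μ) := continuous_iff_continuousAt.mpr fun y => (Phi_deriv (by linarith) y).continuousAt
    have c2 : Continuous (Phi (μ+1)) := continuous_iff_continuousAt.mpr fun y => (Phi_deriv (by linarith) y).continuousAt
    have c3 : Continuous (fun y : ℝ => (y/2)^μ) := (continuous_id.div_const 2).rpow_const (fun _ => Or.inr h.le)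
    have : Continuous B := by fun_prop
    exact this.continuousAt
  have hB0 : B 0 = 1 := by
    have : Real.Gamma (μ+1) ≠ 0 := by rw [hG]; positivity
    simp [hB, Phi_zero, this]
  have ht : Filter.Tendsto B (nhdsWithin 0 (Set.Ioi 0)) (nhds 1) := by
    rw [← hB0]; exact hcont.tendsto.mono_left nhdsWithin_le_nhds
  exact ge_of_tendsto ht (by filter_upwards [self_mem_nhdsWithin] with y hy using hle y hy)

lemma prod_le {ν : ℝ} (h : -(1/2) < ν) {x : ℝ} (hx : 0 < x) :
    x^2 * besselK (ν+2) x * (besselI ν x + besselI (ν+1) x) ≤ 2*ν+2+x := by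
  have w := wronsk_le (μ := ν+1) (by linarith) hx
  have r := besselI_rec (ν := ν) (by linarith) hx
  have k := K_rec (ν+1) hx
  have m := K_mono h hx
  have p := besselI_pos (ν := ν+2) (by linarith) hx
  have e1 : ν + 1 + 1 = ν + 2 := by ring
  have e2 : ν + 1 - 1 = ν := by ring
  rw [e1] at w k
  rw [e2] at k
  have r' : x * besselI ν x = 2 * (ν+1) * besselI (ν+1) x + x * besselI (ν+2) x := by
    rw [r]; field_simp
  have hm : 0 ≤ x^2 * besselI (ν+2) x * (besselK (ν+1) x - besselK ν x) :=
    mul_nonneg (by positivity) (by linarith)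
  have hw := mul_le_mul_of_nonneg_right w (by linarith : 0 ≤ 2*ν+2+x)
  have key : x^2 * besselK (ν+2) x * (besselI ν x + besselI (ν+1) x) =
    x * (besselI (ν + 1) x * besselK (ν + 2) x + besselI (ν + 2) x * besselK (ν + 1) x) * (2*ν+2+x)
     - x^2 * besselI (ν+2) x * (besselK (ν+1) x - besselK ν x) := by
    linear_combination (x * besselK (ν+2) x) * r' + x * besselI (ν+2) x * k
  linarith

lemma int_le {γ ν : ℝ} (hγ1 : γ < 1) (h : -(1/2) < ν) {x : ℝ} (hx : 0 < x) :
    ∫ t in (0 : ℝ)..x, Real.exp (-γ * t) * t ^ ν * besselI ν t ≤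
      Real.exp (-γ * x) * (x^(ν+1) * (besselI ν x + besselI (ν+1) x)) * ((2*ν+2) / ((2*ν+1) * (2*ν+2+(1-γ)*x))) := by
  set δ := 1 - γ with hδ
  have hδ0 : 0 < δ := by linarith
  set N := fun t : ℝ => Real.exp (-γ * t) * ((1/2)^ν * (t^(2*ν+1) * (Phi ν (t^2/4) + t/2 * Phi (ν+1) (t^2/4)))) * ((2*ν+2) / ((2*ν+1) * (2*ν+2+δ*t))) with hN
  have hNeq : ∀ t, 0 < t → N t = Real.exp (-γ * t) * (t^(ν+1) * (besselI ν t + besselI (ν+1) t)) * ((2*ν+2) / ((2*ν+1) * (2*ν+2+δ*t))) := by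
    intro t ht
    simp only [hN]
    congr 2
    rw [besselI_eq _ ht, besselI_eq _ ht, (by ring : t/2 = (1/2) * t), Real.rpow_add_one (by positivity), Real.rpow_add_one (by positivity),
      Real.rpow_add_one (by positivity), Real.mul_rpow (by norm_num) ht.le, (by ring : 2 * ν = ν + ν), Real.rpow_add ht]
    ring
  have hcont : ContinuousOn N (Set.Icc 0 x) := by
    have c1 : Continuous (Phi ν) := continuous_iff_continuousAt.mpr fun y => (Phi_deriv (by linarith) y).continuousAt
    have c2 : Continuous (Phi (ν+1)) := continuous_iff_continuousAt.mpr fun y => (Phi_deriv (by linarith) y).continuousAt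
    have c3 : Continuous (fun y : ℝ => y^(2*ν+1)) := continuous_id.rpow_const (fun _ => Or.inr (by linarith))
    apply ContinuousOn.mul
    · apply Continuous.continuousOn; fun_prop
    · apply ContinuousOn.div
      · fun_prop
      · fun_prop
      · intro t ht
        have : 0 ≤ δ * t := mul_nonneg hδ0.le ht.1
        have : 0 < (2*ν+1) * (2*ν+2+δ*t) := mul_pos (by linarith) (by linarith)
        exact this.ne'
  have hN0 : N 0 = 0 := by
    simp only [hN]
    rw [Real.zero_rpow (by linarith)]; simp
  rw [← hNeq x hx]
  have hNx : 0 ≤ N x := by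
    rw [hNeq x hx]
    have p1 := besselI_pos (ν := ν) (by linarith) hx
    have p2 := besselI_pos (ν := ν+1) (by linarith) hx
    have a1 : 0 < 2*ν+2 := by linarith
    have a2 : 0 < 2*ν+1 := by linarith
    positivity
  by_cases hfInt : IntervalIntegrable (fun t => Real.exp (-γ * t) * t ^ ν * besselI ν t) volume 0 x
  swap
  · rw [intervalIntegral.integral_undef hfInt]; exact hNx
  have hfInt' := (intervalIntegrable_iff_integrableOn_Icc_of_le hx.le).mp hfInt
  have main := intervalIntegral.integral_le_sub_of_hasDeriv_right_of_le hx.le hcont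
    (g' := fun t => Real.exp (-γ * t) * ((2*ν+2) / ((2*ν+1) * (2*ν+2+δ*t))) *
      ((2*ν+1) * t^ν * besselI ν t + δ * (t^(ν+1) * (besselI ν t + besselI (ν+1) t)) * (1 - 1/(2*ν+2+δ*t)))) ?_ hfInt' ?_
  · rw [hN0, sub_zero] at main; exact main
  · intro t ht
    have ht : 0 < t := ht.1
    apply HasDerivAt.hasDerivWithinAt
    have hev : N =ᶠ[nhds t] fun t => Real.exp (-γ * t) * (t^(ν+1) * (besselI ν t + besselI (ν+1) t)) * ((2*ν+2) / ((2*ν+1) * (2*ν+2+δ*t))) := by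
      filter_upwards [lt_mem_nhds ht] with z hz using hNeq z hz
    refine HasDerivAt.congr_of_eventuallyEq ?_ hev
    have d1 := besselI_deriv (ν := ν) (by linarith) ht
    have d2 := besselI_deriv (ν := ν+1) (by linarith) ht
    have e1 : ν + 1 + 1 = ν + 2 := by ring
    rw [e1] at d2
    have r := besselI_rec (ν := ν) (by linarith) ht
    have r1' : besselI (ν+2) t = besselI ν t - 2 * (ν+1) / t * besselI (ν+1) t := by linarith
    have d3 : HasDerivAt (fun t : ℝ => t^(ν+1)) ((ν+1) * t^ν) t := by
      have := Real.hasDerivAt_rpow_const (x := t) (p := ν+1) (Or.inl ht.ne')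
      rwa [add_sub_cancel_right] at this
    have d4 : HasDerivAt (fun t : ℝ => Real.exp (-γ * t)) (Real.exp (-γ * t) * (-γ * 1)) t :=
      ((hasDerivAt_id t).const_mul (-γ)).exp
    have hb : 0 < 2*ν+2+δ*t := by have := mul_pos hδ0 ht; linarith
    have ha : 0 < 2*ν+1 := by linarith
    have d5 : HasDerivAt (fun t : ℝ => (2*ν+1) * (2*ν+2+δ*t)) ((2*ν+1) * (δ * 1)) t :=
      (((hasDerivAt_id t).const_mul δ).const_add _).const_mul _
    have d6 := (hasDerivAt_const t (2*ν+2)).div d5 (by positivity)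
    convert! (d4.mul (d3.mul (d1.add d2))).mul d6 using 1
    simp only [Pi.add_apply, Pi.mul_apply, Pi.div_apply, r1']
    rw [Real.rpow_add_one ht.ne']
    have hγ : γ = 1 - δ := by rw [hδ]; ring
    generalize Real.exp (-γ * t) = E
    rw [hγ]
    obtain ⟨D, hD⟩ : ∃ D, D = 2*ν+2+δ*t := ⟨_, rfl⟩
    rw [← hD] at hb ⊢
    field_simp
    rw [hD]
    ring
  · intro t ht
    have ht : 0 < t := ht.1
    have p1 := besselI_pos (ν := ν) (by linarith) ht
    have p2 := besselI_pos (ν := ν+1) (by linarith) ht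
    set s := δ * t with hs
    have hs0 : 0 < s := mul_pos hδ0 ht
    have ha : 0 < 2*ν+1 := by linarith
    have hb : 0 < 2*ν+2+s := by linarith
    have hq : 0 ≤ 1 - 1/(2*ν+2+s) := by
      rw [sub_nonneg, div_le_one hb]; linarith
    have hle : (2*ν+1) * t^ν * besselI ν t + s * (t^ν * besselI ν t) * (1 - 1/(2*ν+2+s)) ≤
       (2*ν+1) * t^ν * besselI ν t + δ * (t^(ν+1) * (besselI ν t + besselI (ν+1) t)) * (1 - 1/(2*ν+2+s)) := by
      apply add_le_add le_rfl
      apply mul_le_mul_of_nonneg_right _ hq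
      rw [Real.rpow_add_one ht.ne', hs]
      have : 0 < δ * (t^ν * t) * besselI (ν+1) t := by positivity
      linarith
    have h2 : 0 < 2*ν+2 := by linarith
    calc _ = Real.exp (-γ * t) * (t^ν * besselI ν t) * 1 := by ring
      _ ≤ Real.exp (-γ * t) * (t^ν * besselI ν t) * (((2*ν+2) / ((2*ν+1) * (2*ν+2+s))) * ((2*ν+1) + s * (1 - 1/(2*ν+2+s)))) := by
        gcongr
        have : ((2*ν+2) / ((2*ν+1) * (2*ν+2+s))) * ((2*ν+1) + s * (1 - 1/(2*ν+2+s))) = 1 + s^2 / ((2*ν+1) * (2*ν+2+s)^2) := by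
          obtain ⟨D, hD⟩ : ∃ D, D = 2*ν+2+s := ⟨_, rfl⟩
          rw [← hD] at hb ⊢
          field_simp
          rw [hD]
          ring
        rw [this]
        have : 0 ≤ s^2 / ((2*ν+1) * (2*ν+2+s)^2) := by positivity
        linarith
      _ = Real.exp (-γ * t) * ((2*ν+2) / ((2*ν+1) * (2*ν+2+s))) * ((2*ν+1) * t^ν * besselI ν t + s * (t^ν * besselI ν t) * (1 - 1/(2*ν+2+s))) := by ring
      _ ≤ _ := by gcongr

theorem stmt_11 (β ν : ℝ) (hβ0 : -1 < β) (hβ1 : β < 0) (hν : -(1/2) < ν) (x : ℝ) (hx : 0 < x) :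
    (Real.exp (-β * x) * besselK (ν + 2) x / x ^ (ν - 1)) *
        ∫ t in (0 : ℝ)..x, Real.exp (β * t) * t ^ ν * besselI ν t <
      (2 * ν + 7) / ((2 * ν + 1) * (1 + β)) := by
  have h1 := int_le (γ := -β) (by linarith) hν hx
  rw [neg_neg, sub_neg_eq_add] at h1
  have h2 := prod_le hν hx
  have hk := K_pos (ν+2) x
  have ha : 0 < 2*ν+1 := by linarith
  have ha2 : 0 < 2*ν+2 := by linarith
  have hδ : 0 < 1 + β := by linarith
  have hC : 0 ≤ Real.exp (-β * x) * besselK (ν + 2) x / x ^ (ν - 1) := by positivity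
  have hb : 0 < 2*ν+2+(1+β)*x := by positivity
  calc _ ≤ (Real.exp (-β * x) * besselK (ν + 2) x / x ^ (ν - 1)) * (Real.exp (β * x) * (x^(ν+1) * (besselI ν x + besselI (ν+1) x)) * ((2*ν+2) / ((2*ν+1) * (2*ν+2+(1+β)*x)))) :=
        mul_le_mul_of_nonneg_left h1 hC
    _ = (x^2 * besselK (ν+2) x * (besselI ν x + besselI (ν+1) x)) * ((2*ν+2) / ((2*ν+1) * (2*ν+2+(1+β)*x))) := by
      have e : Real.exp (-β * x) = (Real.exp (β * x))⁻¹ := by rw [← Real.exp_neg]; ring_nf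
      rw [e, Real.rpow_add_one hx.ne', Real.rpow_sub_one hx.ne']
      have := Real.exp_pos (β * x)
      have : 0 < x^ν := by positivity
      field_simp
    _ ≤ (2*ν+2+x) * ((2*ν+2) / ((2*ν+1) * (2*ν+2+(1+β)*x))) := by gcongr
    _ ≤ (2*ν+2) / ((2*ν+1) * (1+β)) := by
      rw [mul_div_assoc', div_le_div_iff₀ (by positivity) (by positivity)]
      have : (1+β) * (2*ν+2+x) ≤ 2*ν+2+(1+β)*x := by nlinarith
      have := mul_le_mul_of_nonneg_left this (by positivity : 0 ≤ (2*ν+2) * (2*ν+1))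
      linarith
    _ < _ := by gcongr; linarith
end

section
/- Let −1 < β < 0 and ν > −1/2. Then for all x > 0, ( e^{−βx} K_{ν+1}(x) / x^{ν−1} ) · ∫_0^x e^{βt} t^ν I_ν(t) dt < (2ν+7) / (2(2ν+1)(1+β)). -/
open Real MeasureTheory

noncomputable def bcoef (ν : ℝ) (k : ℕ) : ℝ :=
  1 / (2 ^ ν * 4 ^ k * (Real.Gamma (ν + (k : ℝ) + 1) * (Nat.factorial k : ℝ)))

noncomputable def besL (ν t : ℝ) : ℝ := ∑' k : ℕ, bcoef ν k * t ^ (2 * k)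

lemma bgamma_pos {ν : ℝ} (hν : -(1/2) < ν) (k : ℕ) : 0 < Real.Gamma (ν + (k : ℝ) + 1) := by
  apply Real.Gamma_pos_of_pos
  have : (0 : ℝ) ≤ k := Nat.cast_nonneg k
  linarith

lemma bcoef_pos {ν : ℝ} (hν : -(1/2) < ν) (k : ℕ) : 0 < bcoef ν k := by
  unfold bcoef
  have := bgamma_pos hν k
  have h2 : (0 : ℝ) < 2 ^ ν := Real.rpow_pos_of_pos two_pos ν
  positivity

lemma bcoef_up {ν : ℝ} (hν : -(1/2) < ν) (k : ℕ) :
    bcoef ν k = 2 * (ν + k + 1) * bcoef (ν + 1) k := by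
  unfold bcoef
  have h2 : (0 : ℝ) < 2 ^ ν := Real.rpow_pos_of_pos two_pos ν
  have hg := bgamma_pos hν k
  have hk : (0 : ℝ) ≤ k := Nat.cast_nonneg k
  have hp : (0 : ℝ) < ν + k + 1 := by linarith
  have e : ν + 1 + (k : ℝ) + 1 = (ν + k + 1) + 1 := by ring
  rw [e, Real.Gamma_add_one hp.ne', Real.rpow_add_one two_ne_zero]
  have hf : (0 : ℝ) < (Nat.factorial k : ℝ) := by positivity
  field_simp

lemma bcoef_succ {ν : ℝ} (k : ℕ) :
    2 * ((k : ℝ) + 1) * bcoef ν (k + 1) = bcoef (ν + 1) k := by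
  unfold bcoef
  have h2 : (0 : ℝ) < 2 ^ ν := Real.rpow_pos_of_pos two_pos ν
  have e : ν + ((k + 1 : ℕ) : ℝ) + 1 = ν + 1 + k + 1 := by push_cast; ring
  rw [e, Real.rpow_add_one two_ne_zero, Nat.factorial_succ]
  have hf : (0 : ℝ) < (Nat.factorial k : ℝ) := by positivity
  have hk : (0 : ℝ) < (k : ℝ) + 1 := by positivity
  push_cast
  by_cases hg : Real.Gamma (ν + 1 + k + 1) = 0
  · simp [hg]
  field_simp
  ring

lemma bcoef_le {ν : ℝ} (hν : -(1/2) < ν) (k : ℕ) :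
    bcoef ν k ≤ bcoef ν 0 * (1 / (Nat.factorial k : ℝ)) := by
  induction k with
  | zero => simp
  | succ k ih =>
    have h1 := bcoef_succ (ν := ν) k
    have h2 := bcoef_up hν k
    have h3 := bcoef_pos hν k
    have h4 := bcoef_pos hν (k+1)
    have hk : (0 : ℝ) ≤ k := Nat.cast_nonneg k
    have h5 : ((k : ℝ) + 1) * bcoef ν (k + 1) ≤ bcoef ν k := by
      rw [h2, ← h1]
      have : 0 < ((k : ℝ) + 1) * bcoef ν (k + 1) := by positivity
      nlinarith
    rw [Nat.factorial_succ]
    push_cast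
    have : bcoef ν (k+1) ≤ bcoef ν k / ((k : ℝ) + 1) := by
      rw [le_div_iff₀ (by positivity)]; linarith
    refine this.trans ?_
    calc bcoef ν k / ((k : ℝ) + 1) ≤ (bcoef ν 0 * (1 / (Nat.factorial k : ℝ))) / ((k : ℝ) + 1) := by
          gcongr
      _ = _ := by
          have hf : (0 : ℝ) < (Nat.factorial k : ℝ) := by positivity
          field_simp

lemma besL_summable {ν : ℝ} (hν : -(1/2) < ν) (t : ℝ) :
    Summable fun k : ℕ => bcoef ν k * t ^ (2 * k) := by
  have h := (Real.summable_pow_div_factorial (t ^ 2)).mul_left (bcoef ν 0)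
  refine Summable.of_nonneg_of_le (fun k => ?_) (fun k => ?_) h
  · have := bcoef_pos hν k
    rw [pow_mul]; positivity
  · rw [pow_mul]
    calc _ ≤ (bcoef ν 0 * (1 / (Nat.factorial k : ℝ))) * (t ^ 2) ^ k := by
          gcongr; exact bcoef_le hν k
      _ = _ := by ring

lemma besselI_eq_s13 {ν t : ℝ} (ht : 0 < t) : besselI ν t = t ^ ν * besL ν t := by
  unfold besselI besL
  rw [← tsum_mul_left]
  congr 1
  ext k
  unfold bcoef
  rw [Real.rpow_add (by positivity), Real.div_rpow ht.le two_pos.le]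
  have : (t / 2) ^ (2 * (k : ℝ)) = t ^ (2 * k) / 4 ^ k := by
    have : (2 * (k : ℝ)) = ((2 * k : ℕ) : ℝ) := by push_cast; ring
    rw [this, Real.rpow_natCast, div_pow, pow_mul 2]; norm_num
  rw [this]
  ring

lemma besL_pos {ν : ℝ} (hν : -(1/2) < ν) (t : ℝ) : 0 < besL ν t := by
  unfold besL
  refine (besL_summable hν t).tsum_pos (fun k => ?_) 0 ?_
  · have := bcoef_pos hν k
    rw [pow_mul]; positivity
  · simpa using bcoef_pos hν 0

lemma besL_zero (ν : ℝ) : besL ν 0 = bcoef ν 0 := by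
  unfold besL
  rw [tsum_eq_single 0]
  · simp
  · intro k hk
    simp [hk]

lemma besL_recur {ν : ℝ} (hν : -(1/2) < ν) (t : ℝ) :
    besL ν t = (2 * ν + 2) * besL (ν + 1) t + t ^ 2 * besL (ν + 1 + 1) t := by
  have h1 : -(1/2) < ν + 1 := by linarith
  have h2 : -(1/2) < ν + 1 + 1 := by linarith
  have s0 := besL_summable hν t
  have s1 := besL_summable h1 t
  have s2 := besL_summable h2 t
  unfold besL
  have e : ∀ k, bcoef ν k * t ^ (2 * k) - (2 * ν + 2) * (bcoef (ν + 1) k * t ^ (2 * k))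
      = 2 * k * bcoef (ν + 1) k * t ^ (2 * k) := by
    intro k; rw [bcoef_up hν k]; ring
  have s3 := s0.sub (s1.mul_left (2 * ν + 2))
  have : ∑' k, (bcoef ν k * t ^ (2 * k) - (2 * ν + 2) * (bcoef (ν + 1) k * t ^ (2 * k)))
      = t ^ 2 * ∑' k, bcoef (ν + 1 + 1) k * t ^ (2 * k) := by
    rw [s3.tsum_eq_zero_add, e 0, ← tsum_mul_left]
    simp only [Nat.cast_zero, mul_zero, zero_mul, zero_add]
    congr 1
    ext k
    rw [e, ← bcoef_succ (ν := ν + 1) k]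
    push_cast; ring
  rw [(s0.tsum_sub (s1.mul_left (2 * ν + 2))), tsum_mul_left] at this
  linarith

lemma besL_hasDerivAt {ν : ℝ} (hν : -(1/2) < ν) (t : ℝ) :
    HasDerivAt (besL ν) (t * besL (ν + 1) t) t := by
  have h1 : -(1/2) < ν + 1 := by linarith
  set R : ℝ := |t| + 1 with hR
  have key := hasDerivAt_tsum_of_isPreconnected
    (g := fun (k : ℕ) (y : ℝ) => bcoef ν k * y ^ (2 * k))
    (g' := fun (k : ℕ) (y : ℝ) => bcoef ν k * ((2 * k : ℕ) * y ^ (2 * k - 1)))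
    (u := fun k : ℕ => bcoef ν k * ((2 * k : ℕ) * R ^ (2 * k - 1)))
    (t := Set.Ioo (-R) R) (y₀ := 0) (y := t) ?_ isOpen_Ioo isPreconnected_Ioo ?_ ?_ ?_ ?_ ?_
  · have s : Summable fun k : ℕ => bcoef ν k * ((2 * k : ℕ) * t ^ (2 * k - 1)) := by
      rw [← summable_nat_add_iff 1]
      refine ((besL_summable h1 t).mul_left t).congr fun k => ?_
      rw [← bcoef_succ (ν := ν) k]
      have : 2 * (k + 1) - 1 = 2 * k + 1 := by omega
      rw [this]; push_cast; ring
    have e : t * besL (ν + 1) t = ∑' k : ℕ, bcoef ν k * ((2 * k : ℕ) * t ^ (2 * k - 1)) := by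
      rw [s.tsum_eq_zero_add]
      unfold besL
      rw [← tsum_mul_left]
      simp only [Nat.cast_zero, mul_zero, zero_mul, zero_add]
      congr 1
      ext k
      rw [← bcoef_succ (ν := ν) k]
      have : 2 * (k + 1) - 1 = 2 * k + 1 := by omega
      rw [this]; push_cast; ring
    rw [e]
    exact key
  · rw [← summable_nat_add_iff 1]
    refine ((besL_summable h1 R).mul_left R).congr fun k => ?_
    rw [← bcoef_succ (ν := ν) k]
    have : 2 * (k + 1) - 1 = 2 * k + 1 := by omega
    rw [this]; push_cast; ring
  · intro k y _
    exact (hasDerivAt_pow (2 * k) y).const_mul _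
  · intro k y hy
    have hy' : |y| ≤ R := (abs_lt.mpr hy).le
    have := bcoef_pos hν k
    rw [Real.norm_eq_abs, abs_mul, abs_mul, abs_pow, abs_of_pos this, Nat.abs_cast]
    gcongr
  · constructor <;> · have := abs_nonneg t; linarith
  · exact besL_summable hν 0
  · exact abs_lt.mp (by linarith)

lemma sq_le_cosh (t : ℝ) : t ^ 2 / 4 ≤ Real.cosh t := by
  have h := Real.quadratic_le_exp_of_nonneg (abs_nonneg t)
  rw [← Real.cosh_abs, Real.cosh_eq]
  have := Real.exp_pos (-|t|)
  have := abs_nonneg t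
  have := sq_abs t
  nlinarith

lemma kexp_le {c : ℝ} (hc : 0 < c) (μ t : ℝ) :
    Real.exp (-c * Real.cosh t + μ * t) ≤ Real.exp (2 * μ ^ 2 / c) * Real.exp (-(c / 8) * t ^ 2) := by
  rw [← Real.exp_add]
  apply Real.exp_le_exp.mpr
  have h := mul_le_mul_of_nonneg_left (sq_le_cosh t) hc.le
  have h2 : μ * t ≤ 2 * μ ^ 2 / c + c / 8 * t ^ 2 := by
    have : 2 * μ ^ 2 / c + c / 8 * t ^ 2 - μ * t = (4 * μ - c * t) ^ 2 / (8 * c) := by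
      field_simp; ring
    have h3 : 0 ≤ (4 * μ - c * t) ^ 2 / (8 * c) := by positivity
    linarith
  nlinarith

lemma kexp_integrable {c : ℝ} (hc : 0 < c) (μ : ℝ) :
    Integrable fun t : ℝ => Real.exp (-c * Real.cosh t + μ * t) := by
  refine Integrable.mono' ((integrable_exp_neg_mul_sq (b := c / 8) (by positivity)).const_mul
    (Real.exp (2 * μ ^ 2 / c))) ?_ ?_
  · exact (by fun_prop : Continuous _).aestronglyMeasurable
  · refine Filter.Eventually.of_forall fun t => ?_
    rw [Real.norm_eq_abs, abs_of_pos (Real.exp_pos _)]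
    exact kexp_le hc μ t

noncomputable def kE (μ x : ℝ) : ℝ := ∫ t : ℝ, Real.exp (-x * Real.cosh t + μ * t)

lemma besselK_eq {x : ℝ} (hx : 0 < x) (μ : ℝ) : besselK μ x = kE μ x / 2 := by
  have h1 : ∫ t : ℝ, Real.exp (-x * Real.cosh t) * Real.cosh (μ * t) = 2 * besselK μ x := by
    have := integral_comp_abs (f := fun t => Real.exp (-x * Real.cosh t) * Real.cosh (μ * t))
    unfold besselK
    rw [← this]
    congr 1
    ext t
    rw [Real.cosh_abs, ← Real.cosh_abs (μ * t), ← Real.cosh_abs (μ * |t|), abs_mul, abs_mul, abs_abs]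
  have h2 : ∫ t : ℝ, Real.exp (-x * Real.cosh t + (-μ) * t) = kE μ x := by
    unfold kE
    rw [← integral_neg_eq_self]
    congr 1
    ext t
    rw [Real.cosh_neg]; congr 1; ring
  have h3 : ∫ t : ℝ, Real.exp (-x * Real.cosh t) * Real.cosh (μ * t)
      = ∫ t : ℝ, (Real.exp (-x * Real.cosh t + μ * t) / 2 + Real.exp (-x * Real.cosh t + (-μ) * t) / 2) := by
    congr 1
    ext t
    rw [Real.cosh_eq (μ * t), Real.exp_add, Real.exp_add]
    have : -μ * t = -(μ * t) := by ring
    rw [this]; ring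
  rw [integral_add ((kexp_integrable hx μ).div_const 2) ((kexp_integrable hx (-μ)).div_const 2),
    integral_div, integral_div, h2] at h3
  have : ∫ t : ℝ, Real.exp (-x * Real.cosh t + μ * t) = kE μ x := rfl
  linarith

lemma kE_pos {x : ℝ} (hx : 0 < x) (μ : ℝ) : 0 < kE μ x :=
  integral_exp_pos (kexp_integrable hx μ)

lemma kE_neg (x : ℝ) (μ : ℝ) : kE (-μ) x = kE μ x := by
  unfold kE
  conv_rhs => rw [← integral_neg_eq_self]
  congr 1
  ext t
  rw [Real.cosh_neg]; congr 1; ring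

lemma kE_recur {x : ℝ} (hx : 0 < x) (μ : ℝ) :
    x * (kE (μ + 1) x - kE (μ - 1) x) = 2 * μ * kE μ x := by
  have i0 := kexp_integrable hx μ
  have i1 := kexp_integrable hx (μ + 1)
  have i2 := kexp_integrable hx (μ - 1)
  have i12 : Integrable fun t : ℝ => Real.exp (-x * Real.cosh t + (μ + 1) * t) -
      Real.exp (-x * Real.cosh t + (μ - 1) * t) := i1.sub i2
  have hd : ∀ t : ℝ, HasDerivAt (fun t : ℝ => Real.exp (-x * Real.cosh t + μ * t))
      (μ * Real.exp (-x * Real.cosh t + μ * t) -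
        x / 2 * (Real.exp (-x * Real.cosh t + (μ + 1) * t) - Real.exp (-x * Real.cosh t + (μ - 1) * t))) t := by
    intro t
    have h := (((Real.hasDerivAt_cosh t).const_mul (-x)).add ((hasDerivAt_id t).const_mul μ)).exp
    refine h.congr_deriv ?_
    simp only [id, Pi.add_apply]
    have e1 : -x * Real.cosh t + (μ + 1) * t = (-x * Real.cosh t + μ * t) + t := by ring
    have e2 : -x * Real.cosh t + (μ - 1) * t = (-x * Real.cosh t + μ * t) + (-t) := by ring
    rw [e1, e2, Real.exp_add _ t, Real.exp_add _ (-t), Real.sinh_eq]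
    ring
  have key := integral_eq_zero_of_hasDerivAt_of_integrable hd
    ((i0.const_mul μ).sub (i12.const_mul (x / 2))) i0
  have e : ∫ t : ℝ, (μ * Real.exp (-x * Real.cosh t + μ * t) -
        x / 2 * (Real.exp (-x * Real.cosh t + (μ + 1) * t) - Real.exp (-x * Real.cosh t + (μ - 1) * t)))
      = μ * kE μ x - x / 2 * (kE (μ + 1) x - kE (μ - 1) x) := by
    rw [integral_sub (i0.const_mul μ) (i12.const_mul (x / 2)), integral_const_mul,
      integral_const_mul, integral_sub i1 i2]
    rfl
  rw [e] at key
  linarith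

lemma kE_hasDerivAt {x : ℝ} (hx : 0 < x) (μ : ℝ) :
    HasDerivAt (kE μ) (-(kE (μ + 1) x + kE (μ - 1) x) / 2) x := by
  have hsplit : ∀ y t : ℝ, Real.cosh t * Real.exp (-y * Real.cosh t + μ * t) =
      (Real.exp (-y * Real.cosh t + (μ + 1) * t) + Real.exp (-y * Real.cosh t + (μ - 1) * t)) / 2 := by
    intro y t
    have e1 : -y * Real.cosh t + (μ + 1) * t = (-y * Real.cosh t + μ * t) + t := by ring
    have e2 : -y * Real.cosh t + (μ - 1) * t = (-y * Real.cosh t + μ * t) + (-t) := by ring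
    rw [e1, e2, Real.exp_add _ t, Real.exp_add _ (-t)]
    nth_rw 1 [Real.cosh_eq]
    ring
  have hx2 : 0 < x / 2 := by positivity
  have ib := ((kexp_integrable hx2 (μ + 1)).add (kexp_integrable hx2 (μ - 1))).div_const 2
  have ix := ((kexp_integrable hx (μ + 1)).add (kexp_integrable hx (μ - 1))).div_const 2
  have key := hasDerivAt_integral_of_dominated_loc_of_deriv_le (μ := volume) (𝕜 := ℝ)
    (F := fun y t : ℝ => Real.exp (-y * Real.cosh t + μ * t))
    (F' := fun y t : ℝ => -(Real.cosh t * Real.exp (-y * Real.cosh t + μ * t)))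
    (bound := fun t : ℝ => (Real.exp (-(x/2) * Real.cosh t + (μ + 1) * t) +
        Real.exp (-(x/2) * Real.cosh t + (μ - 1) * t)) / 2)
    (s := Set.Ioi (x / 2)) (x₀ := x) (Ioi_mem_nhds (by linarith))
    (Filter.Eventually.of_forall fun y => (by fun_prop : Continuous _).aestronglyMeasurable)
    (kexp_integrable hx μ)
    (by exact (by fun_prop : Continuous _).aestronglyMeasurable)
    ?_ ib ?_
  · have h2 := key.2
    have e : ∫ t : ℝ, -(Real.cosh t * Real.exp (-x * Real.cosh t + μ * t))
        = -(kE (μ + 1) x + kE (μ - 1) x) / 2 := by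
      rw [integral_neg]
      simp_rw [hsplit]
      rw [integral_div, integral_add (kexp_integrable hx (μ + 1)) (kexp_integrable hx (μ - 1))]
      unfold kE; ring
    rw [e] at h2
    exact h2
  · refine Filter.Eventually.of_forall fun t y hy => ?_
    have hc := Real.cosh_pos t
    rw [norm_neg, Real.norm_eq_abs, abs_of_pos (by positivity), ← hsplit]
    have : x / 2 < y := hy
    gcongr
  · refine Filter.Eventually.of_forall fun t y hy => ?_
    have h := (((hasDerivAt_id y).neg.mul_const (Real.cosh t)).add_const (μ * t)).exp
    refine h.congr_deriv ?_
    simp only [Pi.neg_apply, id]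
    ring

lemma kE_deriv_down {x : ℝ} (hx : 0 < x) (μ : ℝ) :
    HasDerivAt (kE μ) (-kE (μ + 1) x + μ / x * kE μ x) x := by
  refine (kE_hasDerivAt hx μ).congr_deriv ?_
  have := kE_recur hx μ
  field_simp
  linarith

lemma kE_deriv_up {x : ℝ} (hx : 0 < x) (μ : ℝ) :
    HasDerivAt (kE (μ + 1)) (-kE μ x - (μ + 1) / x * kE (μ + 1) x) x := by
  refine (kE_hasDerivAt hx (μ + 1)).congr_deriv ?_
  have := kE_recur hx (μ + 1)
  rw [add_sub_cancel_right] at *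
  field_simp
  linarith

lemma kE_le_gamma {x μ : ℝ} (hx : 0 < x) (hμ : 0 < μ) :
    x ^ μ * kE μ x ≤ 2 ^ μ * Real.Gamma μ := by
  have hr : 0 < x / 2 := by positivity
  have e1 := integral_image_eq_integral_abs_deriv_smul (s := Set.univ) (f := Real.exp) (f' := Real.exp)
    MeasurableSet.univ (fun t _ => (Real.hasDerivAt_exp t).hasDerivWithinAt)
    (Real.exp_injective.injOn) (fun u : ℝ => u ^ (μ - 1) * Real.exp (-(x / 2 * u)))
  have e2 := integrableOn_image_iff_integrableOn_abs_deriv_smul (s := Set.univ) (f := Real.exp) (f' := Real.exp)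
    MeasurableSet.univ (fun t _ => (Real.hasDerivAt_exp t).hasDerivWithinAt)
    (Real.exp_injective.injOn) (fun u : ℝ => u ^ (μ - 1) * Real.exp (-(x / 2 * u)))
  have eg := Real.integral_rpow_mul_exp_neg_mul_Ioi hμ hr
  rw [Set.image_univ, Real.range_exp] at e1 e2
  have h_integr : IntegrableOn (fun u : ℝ => u ^ (μ - 1) * Real.exp (-(x / 2 * u))) (Set.Ioi 0) := by
    apply MeasureTheory.Integrable.of_integral_ne_zero
    rw [eg]
    have := Real.Gamma_pos_of_pos hμ
    positivity
  rw [e2, integrableOn_univ] at h_integr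
  rw [eg, setIntegral_univ] at e1
  have hle : kE μ x ≤ (1 / (x / 2)) ^ μ * Real.Gamma μ := by
    rw [e1]
    refine integral_mono (kexp_integrable hx μ) h_integr fun t => ?_
    simp only [smul_eq_mul]
    rw [abs_of_pos (Real.exp_pos _), ← Real.exp_mul, ← Real.exp_add, ← Real.exp_add]
    apply Real.exp_le_exp.mpr
    have : Real.exp t / 2 ≤ Real.cosh t := by
      rw [Real.cosh_eq]; have := Real.exp_pos (-t); linarith
    nlinarith
  have e3 : (1 / (x / 2)) ^ μ = 2 ^ μ / x ^ μ := by
    rw [one_div_div, Real.div_rpow two_pos.le hx.le]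
  rw [e3] at hle
  have hxp := Real.rpow_pos_of_pos hx μ
  calc x ^ μ * kE μ x ≤ x ^ μ * (2 ^ μ / x ^ μ * Real.Gamma μ) := by gcongr
    _ = _ := by field_simp

lemma kE_mono {x ν : ℝ} (hx : 0 < x) (hν : -(1/2) < ν) : kE ν x ≤ kE (ν + 1) x := by
  have h1 : besselK ν x ≤ besselK (ν + 1) x := by
    have hi : ∀ μ : ℝ, Integrable fun t : ℝ => Real.exp (-x * Real.cosh t) * Real.cosh (μ * t) := by
      intro μ
      refine (((kexp_integrable hx μ).add (kexp_integrable hx (-μ))).div_const 2).congr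
        (Filter.Eventually.of_forall fun t => ?_)
      simp only [Pi.add_apply]
      rw [Real.cosh_eq (μ * t), Real.exp_add, Real.exp_add]
      have : -μ * t = -(μ * t) := by ring
      rw [this]; ring
    unfold besselK
    refine integral_mono (hi ν).integrableOn (hi (ν + 1)).integrableOn fun t => ?_
    have : Real.cosh (ν * t) ≤ Real.cosh ((ν + 1) * t) := by
      rw [Real.cosh_le_cosh, abs_mul, abs_mul]
      have : |ν| ≤ |ν + 1| := by
        rw [abs_of_pos (by linarith : 0 < ν + 1), abs_le]; constructor <;> linarith
      gcongr
    have := Real.exp_pos (-x * Real.cosh t)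
    gcongr
  rw [besselK_eq hx, besselK_eq hx] at h1
  linarith

lemma kE_decay {x : ℝ} (hx : 1 ≤ x) (μ : ℝ) : kE μ x ≤ Real.exp (1 - x) * kE μ 1 := by
  unfold kE
  rw [← integral_const_mul]
  refine integral_mono (kexp_integrable (by linarith) μ)
    ((kexp_integrable one_pos μ).const_mul _) fun t => ?_
  simp only
  rw [← Real.exp_add]
  apply Real.exp_le_exp.mpr
  have := Real.one_le_cosh t
  nlinarith

lemma bsq_le {a b : ℝ} (h : a ^ 2 ≤ b ^ 2) (hb : 0 ≤ b) : a ≤ b := abs_le_of_sq_le_sq' h hb |>.2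

lemma deriv_mono_Ici {F F' : ℝ → ℝ} (hc : ContinuousOn F (Set.Ici 0))
    (hd : ∀ t : ℝ, 0 < t → HasDerivAt F (F' t) t) (hn : ∀ t : ℝ, 0 < t → 0 ≤ F' t) :
    MonotoneOn F (Set.Ici 0) := by
  refine monotoneOn_of_deriv_nonneg (convex_Ici 0) hc ?_ ?_
  · rw [interior_Ici]
    exact fun t ht => (hd t ht).differentiableAt.differentiableWithinAt
  · rw [interior_Ici]
    intro t ht
    rw [(hd t ht).deriv]
    exact hn t ht

lemma deriv_anti_Ioi {F F' : ℝ → ℝ}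
    (hd : ∀ t : ℝ, 0 < t → HasDerivAt F (F' t) t) (hn : ∀ t : ℝ, 0 < t → F' t ≤ 0) :
    AntitoneOn F (Set.Ioi 0) := by
  refine antitoneOn_of_deriv_nonpos (convex_Ioi 0)
    (fun t ht => (hd t ht).continuousAt.continuousWithinAt) ?_ ?_
  · rw [interior_Ioi]
    exact fun t ht => (hd t ht).differentiableAt.differentiableWithinAt
  · rw [interior_Ioi]
    intro t ht
    rw [(hd t ht).deriv]
    exact hn t ht

lemma besL_continuous {ν : ℝ} (hν : -(1/2) < ν) : Continuous (besL ν) :=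
  continuous_iff_continuousAt.mpr fun t => (besL_hasDerivAt hν t).continuousAt

lemma besL_turan {ν : ℝ} (hν : -(1/2) < ν) {t : ℝ} (ht : 0 < t) :
    t ^ 2 * besL (ν + 1) t ^ 2 + (2 * ν + 1) * (besL ν t * besL (ν + 1) t) ≤ besL ν t ^ 2 := by
  have h1 : -(1/2) < ν + 1 := by linarith
  have hp : 0 < 2 * ν + 1 := by linarith
  have c0 := besL_continuous hν
  have c1 := besL_continuous h1
  have hm := deriv_mono_Ici
    (F := fun t => t ^ (2 * ν + 1) * (besL ν t ^ 2 - t ^ 2 * besL (ν + 1) t ^ 2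
      - (2 * ν + 1) * (besL ν t * besL (ν + 1) t)))
    (F' := fun t => (2 * ν + 1) * t ^ (2 * ν) * (besL ν t * besL (ν + 1) t)) ?_ ?_ ?_
  · have := hm (Set.mem_Ici.mpr le_rfl) (Set.mem_Ici.mpr ht.le) ht.le
    simp only [Real.zero_rpow hp.ne', zero_mul] at this
    have h2 := Real.rpow_pos_of_pos ht (2 * ν + 1)
    have := nonneg_of_mul_nonneg_right this h2
    linarith
  · have : Continuous fun t : ℝ => t ^ (2 * ν + 1) := Real.continuous_rpow_const hp.le
    exact (by fun_prop : Continuous _).continuousOn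
  · intro s hs
    have d0 := besL_hasDerivAt hν s
    have d1 := besL_hasDerivAt h1 s
    have dr := Real.hasDerivAt_rpow_const (x := s) (p := 2 * ν + 1) (Or.inl hs.ne')
    have hrec := besL_recur hν s
    have h := dr.mul (((d0.pow 2).sub (((hasDerivAt_id s).pow 2).mul (d1.pow 2))).sub
      ((d0.mul d1).const_mul (2 * ν + 1)))
    refine h.congr_deriv ?_
    have e : s ^ (2 * ν + 1) = s ^ (2 * ν) * s := Real.rpow_add_one hs.ne' _
    have e2 : s ^ (2 * ν + 1 - 1) = s ^ (2 * ν) := by congr 1; ring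
    simp only [Pi.mul_apply, Pi.sub_apply, Pi.pow_apply, id, e, e2]
    have hz : s ^ 2 * besL (ν + 1 + 1) s = besL ν s - (2 * ν + 2) * besL (ν + 1) s := by linarith
    generalize besL ν s = a at *
    generalize besL (ν + 1) s = b at *
    generalize besL (ν + 1 + 1) s = c at *
    generalize s ^ (2 * ν) = p at *
    push_cast
    linear_combination (-2 * p * s ^ 2 * b - (2 * ν + 1) * p * a) * hz
  · intro s hs
    have := besL_pos hν s
    have := besL_pos h1 s
    positivity

lemma besL_lt {ν : ℝ} (hν : -(1/2) < ν) {t : ℝ} (ht : 0 < t) :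
    t * besL (ν + 1) t ≤ besL ν t := by
  have h := besL_turan hν ht
  have h0 := besL_pos hν t
  have h1 := besL_pos (by linarith : -(1/2) < ν + 1) t
  have : 0 ≤ (2 * ν + 1) * (besL ν t * besL (ν + 1) t) := by
    have : 0 < 2 * ν + 1 := by linarith
    positivity
  apply bsq_le _ h0.le
  nlinarith

lemma besL_lt' {ν : ℝ} (hν : 1/2 ≤ ν) {t : ℝ} (ht : 0 < t) :
    (t + 1) * besL (ν + 1) t ≤ besL ν t := by
  have h := besL_turan (by linarith : -(1/2) < ν) ht
  have h0 := besL_pos (by linarith : -(1/2) < ν) t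
  have h1 := besL_pos (by linarith : -(1/2) < ν + 1) t
  have h01 : 0 < besL ν t * besL (ν + 1) t := by positivity
  have h2 : 2 * (besL ν t * besL (ν + 1) t) ≤ (2 * ν + 1) * (besL ν t * besL (ν + 1) t) := by
    gcongr; linarith
  have h3 : 2 * besL (ν + 1) t ≤ besL ν t := by
    by_contra hc
    push Not at hc
    nlinarith [sq_nonneg (t * besL (ν + 1) t)]
  have : t * besL (ν + 1) t ≤ besL ν t - besL (ν + 1) t := by
    apply bsq_le _ (by linarith)
    nlinarith
  linarith

lemma kE_turan {ν : ℝ} (hν : -(1/2) < ν) {x : ℝ} (hx : 0 < x) :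
    x * kE (ν + 1) x ^ 2 ≤ x * kE ν x ^ 2 + (2 * ν + 1) * (kE ν x * kE (ν + 1) x) := by
  have hp : 0 < 2 * ν + 1 := by linarith
  have ha := deriv_anti_Ioi
    (F := fun x => x * kE ν x ^ 2 + (2 * ν + 1) * (kE ν x * kE (ν + 1) x) - x * kE (ν + 1) x ^ 2)
    (F' := fun x => -((2 * ν + 1) / x * (kE ν x * kE (ν + 1) x))) ?_ ?_
  · have hlim : Filter.Tendsto (fun y : ℝ => -((y ^ 1 * Real.exp (-y)) * (Real.exp (2 - y) * kE (ν + 1) 1 ^ 2)))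
        Filter.atTop (nhds (-(0 * (0 * kE (ν + 1) 1 ^ 2)))) := by
      refine ((Real.tendsto_pow_mul_exp_neg_atTop_nhds_zero 1).mul (Filter.Tendsto.mul_const _ ?_)).neg
      refine Real.tendsto_exp_atBot.comp ?_
      exact Filter.tendsto_atBot_add_const_left _ 2 Filter.tendsto_neg_atTop_atBot
    have : 0 ≤ x * kE ν x ^ 2 + (2 * ν + 1) * (kE ν x * kE (ν + 1) x) - x * kE (ν + 1) x ^ 2 := by
      refine le_of_tendsto (by simpa using hlim) ?_
      filter_upwards [Filter.eventually_ge_atTop (max 1 x)] with y hy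
      have hy1 : 1 ≤ y := (le_max_left _ _).trans hy
      have hyx : x ≤ y := (le_max_right _ _).trans hy
      have h := ha (Set.mem_Ioi.mpr hx) (Set.mem_Ioi.mpr (by linarith)) hyx
      simp only at h
      refine le_trans ?_ h
      have k0 := kE_pos (by linarith : 0 < y) ν
      have k1 := kE_pos (by linarith : 0 < y) (ν + 1)
      have hd := kE_decay hy1 (ν + 1)
      have hd2 : kE (ν + 1) y ^ 2 ≤ (Real.exp (1 - y) * kE (ν + 1) 1) ^ 2 := by gcongr
      have e : Real.exp (-y) * Real.exp (2 - y) = Real.exp (1 - y) ^ 2 := by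
        rw [← Real.exp_add, sq, ← Real.exp_add]; congr 1; ring
      have hy0 : 0 < y := by linarith
      have h3 : y * kE (ν + 1) y ^ 2 ≤ y * (Real.exp (1 - y) * kE (ν + 1) 1) ^ 2 := by gcongr
      have h4 : 0 ≤ y * kE ν y ^ 2 + (2 * ν + 1) * (kE ν y * kE (ν + 1) y) := by positivity
      have h5 : y ^ 1 * Real.exp (-y) * (Real.exp (2 - y) * kE (ν + 1) 1 ^ 2)
          = y * (Real.exp (1 - y) * kE (ν + 1) 1) ^ 2 := by
        linear_combination (y * kE (ν + 1) 1 ^ 2) * e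
      linarith
    linarith
  · intro s hs
    have d0 := kE_deriv_down hs ν
    have d1 := kE_deriv_up hs ν
    have h := (((hasDerivAt_id s).mul (d0.pow 2)).add ((d0.mul d1).const_mul (2 * ν + 1))).sub
      ((hasDerivAt_id s).mul (d1.pow 2))
    refine h.congr_deriv ?_
    simp only [Pi.mul_apply, Pi.sub_apply, Pi.pow_apply, id]
    push_cast
    field_simp
    ring
  · intro s hs
    have k0 := kE_pos hs ν
    have k1 := kE_pos hs (ν + 1)
    have : 0 ≤ (2 * ν + 1) / s * (kE ν s * kE (ν + 1) s) := by positivity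
    linarith

lemma ratio_le {ν : ℝ} (hν : -(1/2) < ν) {x : ℝ} (hx : 0 < x) :
    x * besL (ν + 1) x * kE (ν + 1) x ≤ besL ν x * kE ν x := by
  have hp : 0 < 2 * ν + 1 := by linarith
  have h1 := besL_turan hν hx
  have h2 := kE_turan hν hx
  have l0 := besL_pos hν x
  have l1 := besL_pos (by linarith : -(1/2) < ν + 1) x
  have k0 := kE_pos hx ν
  have k1 := kE_pos hx (ν + 1)
  generalize besL ν x = a at *
  generalize besL (ν + 1) x = b at *
  generalize kE ν x = c at *
  generalize kE (ν + 1) x = d at *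
  by_contra hc
  push Not at hc
  have m1 := mul_le_mul_of_nonneg_left h1 (by positivity : 0 ≤ x * d ^ 2)
  have m2 := mul_le_mul_of_nonneg_left h2 (by positivity : 0 ≤ a ^ 2)
  have m3 : (a * c) ^ 2 < (x * b * d) ^ 2 := by gcongr
  have m4 : x * (a * c) ^ 2 < x * (x * b * d) ^ 2 := by gcongr
  have m5 : (2 * ν + 1) * a * d * (a * c) < (2 * ν + 1) * a * d * (x * b * d) := by gcongr
  nlinarith

lemma wronskian_le {ν : ℝ} (hν : -(1/2) < ν) {x : ℝ} (hx : 0 < x) :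
    x ^ (ν + 1) * (besL ν x * kE (ν + 1) x + x * besL (ν + 1) x * kE ν x) ≤ 2 := by
  have h1 : -(1/2) < ν + 1 := by linarith
  have hp : 0 < ν + 1 := by linarith
  have ha := deriv_anti_Ioi
    (F := fun x => x ^ (ν + 1) * (besL ν x * kE (ν + 1) x + x * besL (ν + 1) x * kE ν x))
    (F' := fun x => 0) ?_ (fun _ _ => le_rfl)
  · set C : ℝ := 2 ^ (ν + 1) * Real.Gamma (ν + 1) with hC
    have hlim : Filter.Tendsto (fun y : ℝ => (besL ν y + y * besL (ν + 1) y) * C)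
        (nhdsWithin 0 (Set.Ioi 0)) (nhds 2) := by
      have c0 := besL_continuous hν
      have c1 := besL_continuous h1
      have hcont : Continuous fun y : ℝ => (besL ν y + y * besL (ν + 1) y) * C := by fun_prop
      have := hcont.tendsto 0
      have e : (besL ν 0 + 0 * besL (ν + 1) 0) * C = 2 := by
        rw [besL_zero, hC]
        unfold bcoef
        have h2 : (0 : ℝ) < 2 ^ ν := Real.rpow_pos_of_pos two_pos ν
        have hg := Real.Gamma_pos_of_pos hp
        rw [Real.rpow_add_one two_ne_zero]
        simp only [Nat.cast_zero, add_zero, pow_zero, Nat.factorial_zero, Nat.cast_one]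
        field_simp
        ring
      rw [e] at this
      exact this.mono_left nhdsWithin_le_nhds
    refine ge_of_tendsto hlim ?_
    filter_upwards [Ioo_mem_nhdsGT hx] with y hy
    have hy0 : 0 < y := hy.1
    have h := ha (Set.mem_Ioi.mpr hy0) (Set.mem_Ioi.mpr hx) hy.2.le
    simp only at h
    refine h.trans ?_
    have l0 := besL_pos hν y
    have l1 := besL_pos h1 y
    have hg := kE_le_gamma hy0 hp
    have hm := kE_mono hy0 hν
    have hyp := Real.rpow_pos_of_pos hy0 (ν + 1)
    have hg0 : y ^ (ν + 1) * kE ν y ≤ C := le_trans (by gcongr) hg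
    calc _ = besL ν y * (y ^ (ν + 1) * kE (ν + 1) y) + y * besL (ν + 1) y * (y ^ (ν + 1) * kE ν y) := by
          ring
      _ ≤ besL ν y * C + y * besL (ν + 1) y * C := by gcongr
      _ = _ := by ring
  · intro s hs
    have d0 := kE_deriv_down hs ν
    have d1 := kE_deriv_up hs ν
    have b0 := besL_hasDerivAt hν s
    have b1 := besL_hasDerivAt h1 s
    have dr := Real.hasDerivAt_rpow_const (x := s) (p := ν + 1) (Or.inl hs.ne')
    have hrec := besL_recur hν s
    have h := dr.mul ((b0.mul d1).add (((hasDerivAt_id s).mul b1).mul d0))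
    refine h.congr_deriv ?_
    have e : s ^ (ν + 1) = s ^ ν * s := Real.rpow_add_one hs.ne' _
    have e2 : s ^ (ν + 1 - 1) = s ^ ν := by congr 1; ring
    simp only [Pi.mul_apply, Pi.add_apply, id, e, e2]
    have hz : s ^ 2 * besL (ν + 1 + 1) s = besL ν s - (2 * ν + 2) * besL (ν + 1) s := by linarith
    generalize besL ν s = a at *
    generalize besL (ν + 1) s = b at *
    generalize besL (ν + 1 + 1) s = c at *
    generalize s ^ ν = p at *
    generalize kE ν s = k at *
    generalize kE (ν + 1) s = l at *
    field_simp
    linear_combination (p * s * k) * hz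

lemma upper_one {ν : ℝ} (hν : -(1/2) < ν) {x : ℝ} (hx : 0 < x) :
    x ^ (ν + 1) * besL ν x * besselK (ν + 1) x ≤ 1 := by
  have h := wronskian_le hν hx
  have l1 := besL_pos (by linarith : -(1/2) < ν + 1) x
  have k0 := kE_pos hx ν
  have hxp := Real.rpow_pos_of_pos hx (ν + 1)
  have : 0 ≤ x ^ (ν + 1) * (x * besL (ν + 1) x * kE ν x) := by positivity
  rw [besselK_eq hx]
  linarith

lemma upper_half {ν : ℝ} (hν : -(1/2) < ν) {x : ℝ} (hx : 0 < x) :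
    x ^ (ν + 1) * (x * besL (ν + 1) x) * besselK (ν + 1) x ≤ 1 / 2 := by
  have h := wronskian_le hν hx
  have hr := ratio_le hν hx
  have l0 := besL_pos hν x
  have l1 := besL_pos (by linarith : -(1/2) < ν + 1) x
  have k0 := kE_pos hx ν
  have k1 := kE_pos hx (ν + 1)
  have hxp := Real.rpow_pos_of_pos hx (ν + 1)
  have h2 : 2 * (x * besL (ν + 1) x * kE (ν + 1) x)
      ≤ besL ν x * kE (ν + 1) x + x * besL (ν + 1) x * kE ν x := by
    apply bsq_le _ (by positivity)
    have := mul_le_mul_of_nonneg_left hr (by positivity : 0 ≤ x * besL (ν + 1) x * kE (ν + 1) x)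
    nlinarith [sq_nonneg (besL ν x * kE (ν + 1) x - x * besL (ν + 1) x * kE ν x)]
  have h3 := mul_le_mul_of_nonneg_left h2 hxp.le
  rw [besselK_eq hx]
  linarith

lemma cheb {x : ℝ} (hx : 0 ≤ x) {f g w : ℝ → ℝ}
    (iw : IntervalIntegrable w volume 0 x)
    (ifw : IntervalIntegrable (fun t => f t * w t) volume 0 x)
    (igw : IntervalIntegrable (fun t => g t * w t) volume 0 x)
    (ifgw : IntervalIntegrable (fun t => f t * g t * w t) volume 0 x)
    (hw : ∀ t ∈ Set.Ioo 0 x, 0 ≤ w t)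
    (hfg : ∀ s ∈ Set.Ioo 0 x, ∀ t ∈ Set.Ioo 0 x, (f s - f t) * (g s - g t) ≤ 0) :
    (∫ t in (0 : ℝ)..x, w t) * (∫ t in (0 : ℝ)..x, f t * g t * w t) ≤
      (∫ t in (0 : ℝ)..x, f t * w t) * (∫ t in (0 : ℝ)..x, g t * w t) := by
  set W := ∫ t in (0 : ℝ)..x, w t with hW
  set FG := ∫ t in (0 : ℝ)..x, f t * g t * w t with hFG
  set F := ∫ t in (0 : ℝ)..x, f t * w t with hF
  set G := ∫ t in (0 : ℝ)..x, g t * w t with hG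
  have expand : ∀ a b c d : ℝ,
      ∫ t in (0 : ℝ)..x, (a * w t - b * (g t * w t) - c * (f t * w t) + d * (f t * g t * w t))
        = a * W - b * G - c * F + d * FG := by
    intro a b c d
    rw [intervalIntegral.integral_add (((iw.const_mul a).sub (igw.const_mul b)).sub (ifw.const_mul c))
        (ifgw.const_mul d),
      intervalIntegral.integral_sub ((iw.const_mul a).sub (igw.const_mul b)) (ifw.const_mul c),
      intervalIntegral.integral_sub (iw.const_mul a) (igw.const_mul b)]
    simp only [intervalIntegral.integral_const_mul]
    rfl
  have h_integr : ∀ a b c d : ℝ, IntervalIntegrable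
      (fun t => a * w t - b * (g t * w t) - c * (f t * w t) + d * (f t * g t * w t)) volume 0 x :=
    fun a b c d => (((iw.const_mul a).sub (igw.const_mul b)).sub (ifw.const_mul c)).add
        (ifgw.const_mul d)
  have h1 : ∀ s ∈ Set.Ioo 0 x, f s * g s * W - f s * G - g s * F + 1 * FG ≤ 0 := by
    intro s hs
    rw [← expand]
    have : (0 : ℝ) = ∫ t in (0 : ℝ)..x, (0 : ℝ) := by simp
    conv_rhs => rw [this]
    refine intervalIntegral.integral_mono_on_of_le_Ioo hx (h_integr _ _ _ _)
      intervalIntegrable_const fun t ht => ?_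
    have := mul_nonpos_of_nonpos_of_nonneg (hfg s hs t ht) (hw t ht)
    linarith
  have h2 : ∫ t in (0 : ℝ)..x, (FG * w t - F * (g t * w t) - G * (f t * w t) + W * (f t * g t * w t)) ≤ 0 := by
    have : (0 : ℝ) = ∫ t in (0 : ℝ)..x, (0 : ℝ) := by simp
    conv_rhs => rw [this]
    refine intervalIntegral.integral_mono_on_of_le_Ioo hx (h_integr _ _ _ _)
      intervalIntegrable_const fun t ht => ?_
    have := mul_nonpos_of_nonpos_of_nonneg (h1 t ht) (hw t ht)
    linarith
  rw [expand] at h2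
  linarith

lemma rpow_ii {p : ℝ} (hp : -1 < p) {g : ℝ → ℝ} (hg : Continuous g) (x : ℝ) :
    IntervalIntegrable (fun t => g t * t ^ p) volume 0 x :=
  (intervalIntegral.intervalIntegrable_rpow' hp).continuousOn_mul hg.continuousOn

lemma int_exp_le {δ x : ℝ} (hδ : 0 < δ) :
    ∫ t in (0 : ℝ)..x, Real.exp (δ * t) ≤ Real.exp (δ * x) / δ := by
  have h := intervalIntegral.integral_comp_mul_left (a := 0) (b := x) (fun t => Real.exp t) hδ.ne'
  rw [h, integral_exp]
  simp only [mul_zero, Real.exp_zero, smul_eq_mul]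
  rw [div_eq_inv_mul]
  have : 0 < δ⁻¹ := by positivity
  nlinarith

lemma int_rpow {p x : ℝ} (hp : -1 < p) :
    ∫ t in (0 : ℝ)..x, t ^ p = x ^ (p + 1) / (p + 1) := by
  rw [integral_rpow (Or.inl hp), Real.zero_rpow (by linarith), sub_zero]

lemma int_exp_rpow_nonneg {δ x p : ℝ} (hδ : 0 < δ) (hx : 0 < x) (hp : 0 ≤ p) :
    ∫ t in (0 : ℝ)..x, Real.exp (δ * t) * t ^ p ≤ x ^ p * Real.exp (δ * x) / δ := by
  have h : ∫ t in (0 : ℝ)..x, Real.exp (δ * t) * t ^ p ≤ ∫ t in (0 : ℝ)..x, Real.exp (δ * t) * x ^ p := by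
    refine intervalIntegral.integral_mono_on_of_le_Ioo hx.le
      (rpow_ii (by linarith) (by fun_prop) x) ((by fun_prop : Continuous _).intervalIntegrable _ _)
      fun t ht => ?_
    have := ht.1.le
    have := ht.2.le
    gcongr
  refine h.trans ?_
  rw [intervalIntegral.integral_mul_const]
  have h2 := int_exp_le (x := x) hδ
  have := Real.rpow_pos_of_pos hx p
  calc _ ≤ Real.exp (δ * x) / δ * x ^ p := by gcongr
    _ = _ := by ring

lemma int_exp_rpow_nonpos {δ x p : ℝ} (hδ : 0 < δ) (hx : 0 < x) (hp : -1 < p) (hp0 : p ≤ 0) :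
    ∫ t in (0 : ℝ)..x, Real.exp (δ * t) * t ^ p ≤ x ^ p * Real.exp (δ * x) / δ / (p + 1) := by
  have h := cheb hx.le (f := fun t => Real.exp (δ * t)) (g := fun t => t ^ p) (w := fun _ => 1)
    intervalIntegrable_const
    ((by fun_prop : Continuous _).intervalIntegrable _ _)
    (by simpa using intervalIntegral.intervalIntegrable_rpow' hp)
    (by simpa using rpow_ii hp (by fun_prop : Continuous fun t => Real.exp (δ * t)) x)
    (fun _ _ => zero_le_one) ?_
  · simp only [mul_one, intervalIntegral.integral_const, sub_zero, smul_eq_mul] at h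
    rw [int_rpow hp] at h
    have h2 := int_exp_le (x := x) hδ
    have hp1 : 0 < p + 1 := by linarith
    have h3 := Real.rpow_pos_of_pos hx (p + 1)
    have h4 : x * ∫ t in (0 : ℝ)..x, Real.exp (δ * t) * t ^ p
        ≤ x * (x ^ p * Real.exp (δ * x) / δ / (p + 1)) := by
      refine h.trans ?_
      calc _ ≤ Real.exp (δ * x) / δ * (x ^ (p + 1) / (p + 1)) := by gcongr
        _ = _ := by rw [Real.rpow_add_one hx.ne']; ring
    exact le_of_mul_le_mul_left h4 hx
  · have anti : ∀ s t : ℝ, 0 < s → 0 < t → s ≤ t →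
        0 ≤ (Real.exp (δ * t) - Real.exp (δ * s)) * (s ^ p - t ^ p) := by
      intro s t hs ht hst
      apply mul_nonneg
      · rw [sub_nonneg]; gcongr
      · rw [sub_nonneg]; exact Real.rpow_le_rpow_of_nonpos hs hst hp0
    intro s hs t ht
    rcases le_total s t with hst | hst
    · have := anti s t hs.1 ht.1 hst; linarith
    · have := anti t s ht.1 hs.1 hst; linarith

lemma int_H {ν x : ℝ} (hν : -(1/2) < ν) (hx : 0 < x) :
    ∫ t in (0 : ℝ)..x, (Real.exp (-t) * besL ν t) * t ^ (2 * ν) =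
      Real.exp (-x) * x ^ (2 * ν + 1) * (besL ν x + x * besL (ν + 1) x) / (2 * ν + 1) := by
  have h1 : -(1/2) < ν + 1 := by linarith
  have hp : 0 < 2 * ν + 1 := by linarith
  have c0 := besL_continuous hν
  have c1 := besL_continuous h1
  have key := intervalIntegral.integral_eq_sub_of_hasDerivAt_of_le hx.le
    (f := fun x => Real.exp (-x) * x ^ (2 * ν + 1) * (besL ν x + x * besL (ν + 1) x) / (2 * ν + 1))
    (f' := fun t => (Real.exp (-t) * besL ν t) * t ^ (2 * ν)) ?_ ?_
    (rpow_ii (by linarith) (by fun_prop) x)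
  · rw [key]
    simp [Real.zero_rpow hp.ne']
  · have : Continuous fun t : ℝ => t ^ (2 * ν + 1) := Real.continuous_rpow_const hp.le
    exact (by fun_prop : Continuous _).continuousOn
  · intro s hs
    have hs0 : 0 < s := hs.1
    have d0 := besL_hasDerivAt hν s
    have d1 := besL_hasDerivAt h1 s
    have dr := Real.hasDerivAt_rpow_const (x := s) (p := 2 * ν + 1) (Or.inl hs0.ne')
    have hrec := besL_recur hν s
    have h := ((((hasDerivAt_id s).neg.exp).mul dr).mul (d0.add ((hasDerivAt_id s).mul d1))).div_const
      (2 * ν + 1)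
    refine h.congr_deriv ?_
    have e : s ^ (2 * ν + 1) = s ^ (2 * ν) * s := Real.rpow_add_one hs0.ne' _
    have e2 : s ^ (2 * ν + 1 - 1) = s ^ (2 * ν) := by congr 1; ring
    simp only [Pi.mul_apply, Pi.add_apply, Pi.neg_apply, id, e, e2]
    have hz : s ^ 2 * besL (ν + 1 + 1) s = besL ν s - (2 * ν + 2) * besL (ν + 1) s := by linarith
    generalize besL ν s = a at *
    generalize besL (ν + 1) s = b at *
    generalize besL (ν + 1 + 1) s = c at *
    generalize s ^ (2 * ν) = p at *
    generalize Real.exp (-s) = q at *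
    field_simp
    linear_combination (q * p * s) * hz

lemma besG_anti {ν : ℝ} (hν : -(1/2) < ν) :
    AntitoneOn (fun t => Real.exp (-t) * besL ν t) (Set.Ioi 0) := by
  refine deriv_anti_Ioi (F' := fun t => Real.exp (-t) * (t * besL (ν + 1) t - besL ν t)) ?_ ?_
  · intro s hs
    refine ((hasDerivAt_id s).neg.exp.mul (besL_hasDerivAt hν s)).congr_deriv ?_
    simp only [Pi.neg_apply, id]
    ring
  · intro s hs
    have := besL_lt hν hs
    exact mul_nonpos_of_nonneg_of_nonpos (Real.exp_pos _).le (by linarith)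

lemma int_J_small {β ν x M : ℝ} (hβ : -1 < β) (hν : -(1/2) < ν) (hx : 0 < x)
    (hM : ∫ t in (0 : ℝ)..x, Real.exp ((1 + β) * t) * t ^ (2 * ν)
      ≤ x ^ (2 * ν) * Real.exp ((1 + β) * x) / (1 + β) * M) (hM0 : 0 ≤ M) :
    ∫ t in (0 : ℝ)..x, Real.exp (β * t) * besL ν t * t ^ (2 * ν)
      ≤ Real.exp (β * x) * x ^ (2 * ν) / (1 + β) * M * (2 * besL ν x) := by
  have hp : 0 < 2 * ν + 1 := by linarith
  have hδ : 0 < 1 + β := by linarith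
  have c0 := besL_continuous hν
  have h := cheb hx.le (f := fun t => Real.exp ((1 + β) * t)) (g := fun t => Real.exp (-t) * besL ν t)
    (w := fun t => t ^ (2 * ν))
    (intervalIntegral.intervalIntegrable_rpow' (by linarith))
    (rpow_ii (by linarith) (by fun_prop) x) (rpow_ii (by linarith) (by fun_prop) x)
    (rpow_ii (by linarith) (by fun_prop) x)
    (fun t ht => Real.rpow_nonneg ht.1.le _) ?_
  · rw [int_rpow (by linarith), int_H hν hx] at h
    have e : ∀ t : ℝ, Real.exp ((1 + β) * t) * (Real.exp (-t) * besL ν t) * t ^ (2 * ν)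
        = Real.exp (β * t) * besL ν t * t ^ (2 * ν) := by
      intro t
      rw [← mul_assoc, ← Real.exp_add]
      congr 3; ring
    simp only [e] at h
    have l0 := besL_pos hν x
    have l1 := besL_pos (by linarith : -(1/2) < ν + 1) x
    have hl := besL_lt hν hx
    have hxp := Real.rpow_pos_of_pos hx (2 * ν + 1)
    have hxq := Real.rpow_pos_of_pos hx (2 * ν)
    have hc : 0 < x ^ (2 * ν + 1) / (2 * ν + 1) := by positivity
    refine le_of_mul_le_mul_left (h.trans ?_) hc
    have e3 : Real.exp (β * x) = Real.exp ((1 + β) * x) * Real.exp (-x) := by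
      rw [← Real.exp_add]; congr 1; ring
    calc _ ≤ (x ^ (2 * ν) * Real.exp ((1 + β) * x) / (1 + β) * M) *
          (Real.exp (-x) * x ^ (2 * ν + 1) * (besL ν x + x * besL (ν + 1) x) / (2 * ν + 1)) := by
          gcongr
      _ ≤ (x ^ (2 * ν) * Real.exp ((1 + β) * x) / (1 + β) * M) *
          (Real.exp (-x) * x ^ (2 * ν + 1) * (2 * besL ν x) / (2 * ν + 1)) := by
          gcongr; linarith
      _ = _ := by rw [e3]; ring
  · have ga := besG_anti hν
    have anti : ∀ s t : ℝ, 0 < s → 0 < t → s ≤ t →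
        0 ≤ (Real.exp ((1 + β) * t) - Real.exp ((1 + β) * s)) *
          (Real.exp (-s) * besL ν s - Real.exp (-t) * besL ν t) := by
      intro s t hs ht hst
      apply mul_nonneg
      · rw [sub_nonneg]; gcongr
      · rw [sub_nonneg]; exact ga (Set.mem_Ioi.mpr hs) (Set.mem_Ioi.mpr ht) hst
    intro s hs t ht
    rcases le_total s t with hst | hst
    · have := anti s t hs.1 ht.1 hst; linarith
    · have := anti t s ht.1 hs.1 hst; linarith

lemma int_J_large {β ν x : ℝ} (hβ : -1 < β) (hβ0 : β < 0) (hν : 1/2 ≤ ν) (hx : 0 < x) :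
    (2 * ν + 1) / (2 * ν + 2) * (1 + β) * ∫ t in (0 : ℝ)..x, Real.exp (β * t) * besL ν t * t ^ (2 * ν)
      ≤ Real.exp (β * x) * x ^ (2 * ν + 1) * besL (ν + 1) x := by
  have h0 : -(1/2) < ν := by linarith
  have h1 : -(1/2) < ν + 1 := by linarith
  have hp : 0 < 2 * ν + 1 := by linarith
  have c0 := besL_continuous h0
  have c1 := besL_continuous h1
  have hi : IntervalIntegrable (fun t => Real.exp (β * t) *
      (β * (t * besL (ν + 1) t) + besL ν t - besL (ν + 1) t) * t ^ (2 * ν)) volume 0 x :=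
    rpow_ii (by linarith) (by fun_prop) x
  have key := intervalIntegral.integral_eq_sub_of_hasDerivAt_of_le hx.le
    (f := fun x => Real.exp (β * x) * x ^ (2 * ν + 1) * besL (ν + 1) x)
    (f' := fun t => Real.exp (β * t) *
      (β * (t * besL (ν + 1) t) + besL ν t - besL (ν + 1) t) * t ^ (2 * ν)) ?_ ?_ hi
  · simp only [Real.zero_rpow hp.ne', mul_zero, zero_mul, sub_zero] at key
    rw [← key, ← intervalIntegral.integral_const_mul]
    refine intervalIntegral.integral_mono_on_of_le_Ioo hx.le
      (IntervalIntegrable.const_mul (rpow_ii (by linarith) (by fun_prop) x) _) hi fun t ht => ?_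
    have l0 := besL_pos h0 t
    have l2 := besL_pos (by linarith : -(1/2) < ν + 1 + 1) t
    have hl := besL_lt' hν ht.1
    have hrec := besL_recur h0 t
    have htp := Real.rpow_pos_of_pos ht.1 (2 * ν)
    have hz : 0 ≤ t ^ 2 * besL (ν + 1 + 1) t := by positivity
    have h2p : 0 < 2 * ν + 2 := by linarith
    have h5 : besL (ν + 1) t ≤ besL ν t - (2 * ν + 1) / (2 * ν + 2) * besL ν t := by
      have : besL ν t - (2 * ν + 1) / (2 * ν + 2) * besL ν t = besL ν t / (2 * ν + 2) := by
        field_simp; ring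
      rw [this, le_div_iff₀ h2p]; linarith
    have h6 : (2 * ν + 1) / (2 * ν + 2) * (1 + β) * besL ν t ≤
        β * (t * besL (ν + 1) t) + besL ν t - besL (ν + 1) t := by
      have m1 : 0 ≤ (1 + β) * (besL ν t - (2 * ν + 1) / (2 * ν + 2) * besL ν t - besL (ν + 1) t) :=
        mul_nonneg (by linarith) (by linarith)
      have m2 : 0 ≤ (-β) * (besL ν t - (t + 1) * besL (ν + 1) t) :=
        mul_nonneg (by linarith) (by linarith)
      linarith
    calc _ = Real.exp (β * t) * ((2 * ν + 1) / (2 * ν + 2) * (1 + β) * besL ν t) * t ^ (2 * ν) := by ring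
      _ ≤ _ := by gcongr
  · have : Continuous fun t : ℝ => t ^ (2 * ν + 1) := Real.continuous_rpow_const hp.le
    exact (by fun_prop : Continuous _).continuousOn
  · intro s hs
    have hs0 : 0 < s := hs.1
    have d1 := besL_hasDerivAt h1 s
    have dr := Real.hasDerivAt_rpow_const (x := s) (p := 2 * ν + 1) (Or.inl hs0.ne')
    have hrec := besL_recur h0 s
    have h := ((((hasDerivAt_id s).const_mul β).exp).mul dr).mul d1
    refine h.congr_deriv ?_
    have e : s ^ (2 * ν + 1) = s ^ (2 * ν) * s := Real.rpow_add_one hs0.ne' _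
    have e2 : s ^ (2 * ν + 1 - 1) = s ^ (2 * ν) := by congr 1; ring
    simp only [Pi.mul_apply, id, e, e2]
    have hz : s ^ 2 * besL (ν + 1 + 1) s = besL ν s - (2 * ν + 2) * besL (ν + 1) s := by linarith
    generalize besL ν s = a at *
    generalize besL (ν + 1) s = b at *
    generalize besL (ν + 1 + 1) s = c at *
    generalize s ^ (2 * ν) = p at *
    generalize Real.exp (β * s) = q at *
    linear_combination (q * p) * hz

theorem stmt_13 (β ν : ℝ) (hβ0 : -1 < β) (hβ1 : β < 0) (hν : -(1/2) < ν) (x : ℝ) (hx : 0 < x) :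
    (Real.exp (-β * x) * besselK (ν + 1) x / x ^ (ν - 1)) *
        ∫ t in (0 : ℝ)..x, Real.exp (β * t) * t ^ ν * besselI ν t <
      (2 * ν + 7) / (2 * (2 * ν + 1) * (1 + β)) := by
  have hδ : 0 < 1 + β := by linarith
  have hp : 0 < 2 * ν + 1 := by linarith
  have hJ : ∫ t in (0 : ℝ)..x, Real.exp (β * t) * t ^ ν * besselI ν t
      = ∫ t in (0 : ℝ)..x, Real.exp (β * t) * besL ν t * t ^ (2 * ν) := by
    rw [intervalIntegral.integral_of_le hx.le, intervalIntegral.integral_of_le hx.le]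
    refine setIntegral_congr_fun measurableSet_Ioc fun t ht => ?_
    have ht0 : 0 < t := ht.1
    rw [besselI_eq_s13 ht0, two_mul, Real.rpow_add ht0]
    ring
  rw [hJ]
  set J := ∫ t in (0 : ℝ)..x, Real.exp (β * t) * besL ν t * t ^ (2 * ν) with hJdef
  have hK : 0 < besselK (ν + 1) x := by
    rw [besselK_eq hx]; have := kE_pos hx (ν + 1); positivity
  have hxp := Real.rpow_pos_of_pos hx (ν - 1)
  have hxn := Real.rpow_pos_of_pos hx ν
  have hpre : 0 ≤ Real.exp (-β * x) * besselK (ν + 1) x / x ^ (ν - 1) := by positivity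
  have e1 : x ^ (ν - 1) = x ^ ν / x := Real.rpow_sub_one hx.ne' _
  have e2 : x ^ (2 * ν) = x ^ ν * x ^ ν := by rw [two_mul, Real.rpow_add hx]
  have e3 : Real.exp (-β * x) * Real.exp (β * x) = 1 := by
    rw [← Real.exp_add]; simp
  have e4 : x ^ (ν + 1) = x ^ ν * x := Real.rpow_add_one hx.ne' _
  have e5 : x ^ (2 * ν + 1) = x ^ ν * x ^ ν * x := by rw [Real.rpow_add_one hx.ne', e2]
  have small : ∀ M : ℝ, 0 ≤ M → (∫ t in (0 : ℝ)..x, Real.exp ((1 + β) * t) * t ^ (2 * ν)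
      ≤ x ^ (2 * ν) * Real.exp ((1 + β) * x) / (1 + β) * M) →
      (Real.exp (-β * x) * besselK (ν + 1) x / x ^ (ν - 1)) * J ≤ 2 * M / (1 + β) := by
    intro M hM0 hM
    have h := mul_le_mul_of_nonneg_left (int_J_small hβ0 hν hx hM hM0) hpre
    refine h.trans ?_
    have hu := upper_one hν hx
    calc _ = (Real.exp (-β * x) * Real.exp (β * x)) * (2 * M / (1 + β)) *
          (x ^ (ν + 1) * besL ν x * besselK (ν + 1) x) := by
          rw [e1, e2, e4]; field_simp
      _ ≤ (Real.exp (-β * x) * Real.exp (β * x)) * (2 * M / (1 + β)) * 1 := by gcongr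
      _ = _ := by rw [e3]; ring
  rcases lt_or_ge ν 0 with hn | hn
  · have h := small (1 / (2 * ν + 1)) (by positivity) (by
      have := int_exp_rpow_nonpos hδ hx (by linarith : -1 < 2 * ν) (by linarith)
      rw [mul_one_div]; exact this)
    refine h.trans_lt ?_
    rw [mul_one_div, div_div, div_lt_div_iff₀ (by positivity) (by positivity)]
    have : 0 < (2 * ν + 1) * (1 + β) := by positivity
    nlinarith
  · rcases lt_or_ge ν (1/2) with hn2 | hn2
    · have h := small 1 zero_le_one (by
        rw [mul_one]; exact int_exp_rpow_nonneg hδ hx (by linarith))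
      refine h.trans_lt ?_
      rw [div_lt_div_iff₀ (by positivity) (by positivity)]
      nlinarith
    · have h := int_J_large hβ0 hβ1 hn2 hx
      have h2p : 0 < 2 * ν + 2 := by linarith
      have h' : J ≤ (2 * ν + 2) / ((2 * ν + 1) * (1 + β)) *
          (Real.exp (β * x) * x ^ (2 * ν + 1) * besL (ν + 1) x) := by
        rw [← hJdef] at h
        calc J = (2 * ν + 2) / ((2 * ν + 1) * (1 + β)) * ((2 * ν + 1) / (2 * ν + 2) * (1 + β) * J) := by
              field_simp
          _ ≤ _ := by gcongr
      have h'' := mul_le_mul_of_nonneg_left h' hpre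
      have hu := upper_half hν hx
      refine h''.trans_lt ?_
      calc _ = (Real.exp (-β * x) * Real.exp (β * x)) * ((2 * ν + 2) / ((2 * ν + 1) * (1 + β))) *
          (x ^ (ν + 1) * (x * besL (ν + 1) x) * besselK (ν + 1) x) := by
            rw [e1, e5, e4]; field_simp
        _ ≤ (Real.exp (-β * x) * Real.exp (β * x)) * ((2 * ν + 2) / ((2 * ν + 1) * (1 + β))) * (1 / 2) := by
            gcongr
        _ = (2 * ν + 2) / (2 * (2 * ν + 1) * (1 + β)) := by rw [e3]; field_simp
        _ < _ := by gcongr; linarith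
end
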